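/- arXiv:0903.1436 — 3 statements merged into one kernel-verified Lean document; each statement's English description precedes it below -/
import Mathlib

section
/- Let n ≥ 1 and let m be a positive integer with m > (n+2)/4. Then there exists a constant C = C(m,n) > 0 such that for every Schwartz function u on ℝ^{n+1}, ‖u‖_{F̃⁰_{∞,1}} ≤ C (1 + ‖u‖_{F̃⁰_{∞,2}} (1 + (log⁺ ‖u‖_{W₂^{2m,m}(ℝ^{n+1})})^{1/2})). -/
open MeasureTheory Real
open scoped FourierTransform ENNReal

noncomputable section

/-- The model space for `ℝ^{n+1}`: generic point `z = (x, t)` where the spatial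
coordinates are `x i = z i.castSucc` (`i : Fin n`) and the time coordinate is
`t = z (Fin.last n)`. -/
abbrev PSpace (n : ℕ) := EuclideanSpace ℝ (Fin (n + 1))

/-- The parabolic distance `‖z‖ₚ = max (maxᵢ |xᵢ|) √|t|` from `z` to the origin. -/
def pnorm {n : ℕ} (z : PSpace n) : ℝ :=
  max (⨆ i : Fin n, |z i.castSucc|) (Real.sqrt |z (Fin.last n)|)

/-- The parabolic cube of radius `r` centered at `z₀`. -/
def pCube {n : ℕ} (z₀ : PSpace n) (r : ℝ) : Set (PSpace n) :=
  {z | pnorm (z - z₀) < r}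

/-- The set of mean oscillations `⨍_Q |u - u_Q|` of `u` over parabolic cubes `Q ⊆ O`. -/
def oscSet {n : ℕ} (O : Set (PSpace n)) (u : PSpace n → ℝ) : Set ℝ :=
  {v | ∃ z₀ r, 0 < r ∧ pCube z₀ r ⊆ O ∧
    v = ⨍ z in pCube z₀ r, |u z - ⨍ w in pCube z₀ r, u w|}

/-- The parabolic BMO norm of `u` over `O`. -/
def pBMO {n : ℕ} (O : Set (PSpace n)) (u : PSpace n → ℝ) : ℝ := sSup (oscSet O u)

/-- The set of quantities `inf_c ⨍_Q |u - c|` over parabolic cubes `Q ⊆ O`. -/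
def infOscSet {n : ℕ} (O : Set (PSpace n)) (u : PSpace n → ℝ) : Set ℝ :=
  {v | ∃ z₀ r, 0 < r ∧ pCube z₀ r ⊆ O ∧
    v = ⨅ c : ℝ, ⨍ z in pCube z₀ r, |u z - c|}

/-- Time derivative `D_t u`. -/
def Dt {n : ℕ} (u : PSpace n → ℝ) : PSpace n → ℝ :=
  fun z => fderiv ℝ u z (EuclideanSpace.single (Fin.last n) 1)

/-- Spatial derivative in direction `i`. -/
def Dx {n : ℕ} (i : Fin n) (u : PSpace n → ℝ) : PSpace n → ℝ :=
  fun z => fderiv ℝ u z (EuclideanSpace.single i.castSucc 1)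

/-- Spatial derivative `D_x^α` for a multi-index `α`. -/
def DxPow {n : ℕ} (α : Fin n → ℕ) (u : PSpace n → ℝ) : PSpace n → ℝ :=
  (List.finRange n).foldr (fun i v => (Dx i)^[α i] v) u

/-- The mixed derivative `D_t^r D_x^α u`. -/
def mixDeriv {n : ℕ} (r : ℕ) (α : Fin n → ℕ) (u : PSpace n → ℝ) : PSpace n → ℝ :=
  Dt^[r] (DxPow α u)

/-- The `L²(O)` norm. -/
def L2norm {n : ℕ} (O : Set (PSpace n)) (v : PSpace n → ℝ) : ℝ :=
  (eLpNorm v 2 (volume.restrict O)).toReal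

/-- The parabolic Sobolev norm `‖u‖_{W₂^{2m,m}(O)} = Σ_{2r+s ≤ 2m} Σ_{|α| = s}
‖D_t^r D_x^α u‖_{L²(O)}`. -/
def sobNorm {n : ℕ} (m : ℕ) (O : Set (PSpace n)) (u : PSpace n → ℝ) : ℝ :=
  ∑ p ∈ (Finset.range (2 * m + 1) ×ˢ Finset.range (2 * m + 1)).filter
      (fun p => 2 * p.1 + p.2 ≤ 2 * m),
    ∑ α ∈ Finset.Nat.antidiagonalTuple n p.2, L2norm O (mixDeriv p.1 α u)

/-- `log⁺ x = max (log x) 0`. -/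
def logPlus (x : ℝ) : ℝ := max (Real.log x) 0

/-- The domain `Ω_T = (0,1)ⁿ × (0,T)`. -/
def OmegaT (n : ℕ) (T : ℝ) : Set (PSpace n) :=
  {z | (∀ i : Fin n, z i.castSucc ∈ Set.Ioo (0 : ℝ) 1) ∧ z (Fin.last n) ∈ Set.Ioo 0 T}

/-- The anisotropic dilation `η^a z = (η x, η² t)` with `a = (1,…,1,2)`. -/
def pdil {n : ℕ} (η : ℝ) (z : PSpace n) : PSpace n :=
  (EuclideanSpace.equiv (Fin (n + 1)) ℝ).symm
    (fun i => if i = Fin.last n then η ^ 2 * z i else η * z i)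

/-- The anisotropic dyadic partition of unity `ψ_j` built from `ψ₀`:
`ψ_j z = ψ₀ (2^{-ja} z) - ψ₀ (2^{-(j-1)a} z)` for `j ≥ 1`. -/
def psiJ {n : ℕ} (ψ₀ : PSpace n → ℝ) : ℕ → PSpace n → ℝ
  | 0 => ψ₀
  | (j + 1) => fun z =>
      ψ₀ (pdil ((2 : ℝ) ^ (-((j : ℝ) + 1))) z) - ψ₀ (pdil ((2 : ℝ) ^ (-(j : ℝ))) z)

/-- `φ_j = 𝓕⁻¹ ψ_j`, the inverse Fourier transform of `ψ_j`. -/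
def phiJ {n : ℕ} (ψ₀ : PSpace n → ℝ) (j : ℕ) : PSpace n → ℂ :=
  𝓕⁻ (fun z => ((psiJ ψ₀ j z : ℝ) : ℂ))

/-- The convolution `(φ * u) z = ∫ φ (z - w) u w dw`. -/
def pconv {n : ℕ} (φ : PSpace n → ℂ) (u : PSpace n → ℝ) (z : PSpace n) : ℂ :=
  ∫ w, φ (z - w) * (u w : ℂ)

/-- The truncated Lizorkin–Triebel norm `‖u‖_{F̃⁰_{∞,1}} = ‖Σ_{j≥1} |φ_j * u|‖_∞`. -/
def F01norm {n : ℕ} (ψ₀ : PSpace n → ℝ) (u : PSpace n → ℝ) : ℝ :=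
  ⨆ z, ∑' j : ℕ, ‖pconv (phiJ ψ₀ (j + 1)) u z‖

/-- The truncated Lizorkin–Triebel norm `‖u‖_{F̃⁰_{∞,2}} = ‖(Σ_{j≥1} |φ_j * u|²)^{1/2}‖_∞`. -/
def F02norm {n : ℕ} (ψ₀ : PSpace n → ℝ) (u : PSpace n → ℝ) : ℝ :=
  ⨆ z, Real.sqrt (∑' j : ℕ, ‖pconv (phiJ ψ₀ (j + 1)) u z‖ ^ 2)

/-- The Lizorkin–Triebel norm `‖u‖_{F^γ_{∞,2}} = ‖(Σ_{j≥0} 2^{2γj} |φ_j * u|²)^{1/2}‖_∞`. -/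
def Fg2norm {n : ℕ} (ψ₀ : PSpace n → ℝ) (γ : ℝ) (u : PSpace n → ℝ) : ℝ :=
  ⨆ z, Real.sqrt (∑' j : ℕ, (2 : ℝ) ^ (2 * γ * j) * ‖pconv (phiJ ψ₀ j) u z‖ ^ 2)

/-- The anisotropic Besov quasi-norm `‖u‖_{B^s_{p,q}}`. -/
def besovNorm {n : ℕ} (ψ₀ : PSpace n → ℝ) (s : ℝ) (p q : ℝ≥0∞) (u : PSpace n → ℝ) : ℝ :=
  if q = ∞ then ⨆ j : ℕ, (2 : ℝ) ^ (s * j) * (eLpNorm (pconv (phiJ ψ₀ j) u) p volume).toReal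
  else (∑' j : ℕ, ((2 : ℝ) ^ (s * j) *
    (eLpNorm (pconv (phiJ ψ₀ j) u) p volume).toReal) ^ q.toReal) ^ (1 / q.toReal)

/-- The standing hypotheses on the cut-off function `ψ₀`: smooth, compactly supported,
equal to `1` on `{‖z‖ₚ ≤ 1}` and to `0` on `{‖z‖ₚ ≥ 2}`. -/
structure IsCutoff {n : ℕ} (ψ₀ : PSpace n → ℝ) : Prop where
  smooth : ContDiff ℝ (⊤ : ℕ∞) ψ₀
  compact_support : HasCompactSupport ψ₀
  eq_one : ∀ z, pnorm z ≤ 1 → ψ₀ z = 1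
  eq_zero : ∀ z, 2 ≤ pnorm z → ψ₀ z = 0

/-!
Write `W = ‖u‖_{W₂^{2m,m}}`. The multiplier `ψ_j` lives where `‖ξ‖ₚ ≈ 2^j`, and there some
coordinate satisfies `|ξ_k|^{2m/a_k} ≥ 2^{2mj}`, so `‖φ_j * u‖_∞ ≤ ∫ |ψ_j| |û|` is at most
`2^{-2mj}` times the integral of `∑_k |ξ_k|^{2m/a_k} |û|` over a parabolic ball of volume
`≈ 2^{(n+2)j}`. Cauchy–Schwarz and Plancherel bound this by a multiple of `2^{((n+2)/2 - 2m)j} W`,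
which decays geometrically since `m > (n+2)/4`.

Now split `∑_j |φ_j * u|` at an index `N`: by Cauchy–Schwarz the first `N` terms contribute at most
`√N ‖u‖_{F̃⁰_{∞,2}}`, while the tail is a geometric series of size `≈ q^N W` with `q < 1`. Taking
`N ≈ log⁺ W / log q⁻¹` makes the tail bounded.
-/

section GeometricDecay

variable {a : ℕ → ℝ} {K q : ℝ}

lemma summable_of_le_geometric (hq₀ : 0 ≤ q) (hq₁ : q < 1) (ha₀ : ∀ j, 0 ≤ a j)
    (ha : ∀ j, a j ≤ K * q ^ j) : Summable a :=
  .of_nonneg_of_le ha₀ ha ((summable_geometric_of_lt_one hq₀ hq₁).mul_left K)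

lemma tsum_le_of_le_geometric (hq₀ : 0 ≤ q) (hq₁ : q < 1) (ha₀ : ∀ j, 0 ≤ a j)
    (ha : ∀ j, a j ≤ K * q ^ j) : ∑' j, a j ≤ K / (1 - q) := by
  calc ∑' j, a j ≤ ∑' j, K * q ^ j :=
        (summable_of_le_geometric hq₀ hq₁ ha₀ ha).tsum_le_tsum ha
          ((summable_geometric_of_lt_one hq₀ hq₁).mul_left K)
    _ = K / (1 - q) := by rw [tsum_mul_left, tsum_geometric_of_lt_one hq₀ hq₁, div_eq_mul_inv]

lemma sq_le_geometric (ha₀ : ∀ j, 0 ≤ a j) (ha : ∀ j, a j ≤ K * q ^ j) (j : ℕ) :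
    a j ^ 2 ≤ K ^ 2 * (q ^ 2) ^ j := by
  calc a j ^ 2 ≤ (K * q ^ j) ^ 2 := pow_le_pow_left₀ (ha₀ j) (ha j) 2
    _ = K ^ 2 * (q ^ 2) ^ j := by ring

lemma summable_sq_of_le_geometric (hq₀ : 0 ≤ q) (hq₁ : q < 1) (ha₀ : ∀ j, 0 ≤ a j)
    (ha : ∀ j, a j ≤ K * q ^ j) : Summable fun j ↦ a j ^ 2 :=
  summable_of_le_geometric (sq_nonneg q) (pow_lt_one₀ hq₀ hq₁ two_ne_zero)
    (fun j ↦ sq_nonneg (a j)) (sq_le_geometric ha₀ ha)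

lemma tsum_sq_le_of_le_geometric (hq₀ : 0 ≤ q) (hq₁ : q < 1) (ha₀ : ∀ j, 0 ≤ a j)
    (ha : ∀ j, a j ≤ K * q ^ j) : ∑' j, a j ^ 2 ≤ K ^ 2 / (1 - q ^ 2) :=
  tsum_le_of_le_geometric (sq_nonneg q) (pow_lt_one₀ hq₀ hq₁ two_ne_zero)
    (fun j ↦ sq_nonneg (a j)) (sq_le_geometric ha₀ ha)

lemma sum_le_sqrt_card_mul_sqrt_tsum_sq {ι : Type*} {f : ι → ℝ}
    (hf : Summable fun i ↦ f i ^ 2) (s : Finset ι) :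
    ∑ i ∈ s, f i ≤ √s.card * √(∑' i, f i ^ 2) := by
  rw [← Real.sqrt_mul (Nat.cast_nonneg _)]
  apply Real.le_sqrt_of_sq_le
  calc (∑ i ∈ s, f i) ^ 2 ≤ s.card * ∑ i ∈ s, f i ^ 2 := sq_sum_le_card_mul_sum_sq
    _ ≤ s.card * ∑' i, f i ^ 2 := by
        gcongr
        exact hf.sum_le_tsum s fun i _ ↦ sq_nonneg (f i)

lemma tsum_le_sqrt_mul_sqrt_tsum_sq_add (hq₀ : 0 ≤ q) (hq₁ : q < 1) (ha₀ : ∀ j, 0 ≤ a j)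
    (ha : ∀ j, a j ≤ K * q ^ j) (N : ℕ) :
    ∑' j, a j ≤ √N * √(∑' j, a j ^ 2) + K * q ^ N / (1 - q) := by
  rw [← (summable_of_le_geometric hq₀ hq₁ ha₀ ha).sum_add_tsum_nat_add N]
  gcongr
  · simpa using sum_le_sqrt_card_mul_sqrt_tsum_sq
      (summable_sq_of_le_geometric hq₀ hq₁ ha₀ ha) (Finset.range N)
  · refine tsum_le_of_le_geometric hq₀ hq₁ (fun j ↦ ha₀ _) fun j ↦ (ha _).trans_eq ?_
    ring

lemma pow_mul_le_one_of_log_le {W : ℝ} {N : ℕ} (hq : 0 < q)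
    (h : Real.log W ≤ N * Real.log q⁻¹) : q ^ N * W ≤ 1 := by
  calc q ^ N * W ≤ q ^ N * Real.exp (Real.log W) := by
        gcongr
        exact Real.le_exp_log W
    _ ≤ q ^ N * Real.exp (N * Real.log q⁻¹) := by gcongr
    _ = 1 := by
        rw [Real.exp_nat_mul, Real.exp_log (inv_pos.2 hq), ← mul_pow, mul_inv_cancel₀ hq.ne',
          one_pow]

lemma sqrt_natCeil_le {x : ℝ} (hx : 0 ≤ x) : √(⌈x⌉₊ : ℝ) ≤ 1 + √x := by
  rw [Real.sqrt_le_left (by positivity)]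
  calc (⌈x⌉₊ : ℝ) ≤ x + 1 := (Nat.ceil_lt_add_one hx).le
    _ ≤ (1 + √x) ^ 2 := by nlinarith [Real.sq_sqrt hx, Real.sqrt_nonneg x]

lemma logPlus_nonneg (x : ℝ) : 0 ≤ logPlus x := le_max_right _ _

lemma exists_pow_mul_le_one_and_sqrt_le (hq₀ : 0 < q) (hq₁ : q < 1) (W : ℝ) :
    ∃ N : ℕ, q ^ N * W ≤ 1 ∧ √N ≤ 1 + √(logPlus W / Real.log q⁻¹) := by
  have hlog : 0 < Real.log q⁻¹ := Real.log_pos ((one_lt_inv₀ hq₀).2 hq₁)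
  refine ⟨⌈logPlus W / Real.log q⁻¹⌉₊, pow_mul_le_one_of_log_le hq₀ ?_,
    sqrt_natCeil_le (div_nonneg (logPlus_nonneg W) hlog.le)⟩
  calc Real.log W ≤ logPlus W := le_max_left _ _
    _ ≤ ⌈logPlus W / Real.log q⁻¹⌉₊ * Real.log q⁻¹ := (div_le_iff₀ hlog).1 (Nat.le_ceil _)

lemma iSup_tsum_le_of_le_geometric {Z : Type*} {a : Z → ℕ → ℝ} {W : ℝ} (hK : 0 ≤ K)
    (hq₀ : 0 < q) (hq₁ : q < 1) (ha₀ : ∀ z j, 0 ≤ a z j) (ha : ∀ z j, a z j ≤ K * W * q ^ j) :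
    ⨆ z, ∑' j, a z j ≤
      K / (1 - q) + (⨆ z, √(∑' j, a z j ^ 2)) * (1 + √(logPlus W / Real.log q⁻¹)) := by
  have hKq : 0 ≤ K / (1 - q) := div_nonneg hK (sub_nonneg.2 hq₁.le)
  have hS : 0 ≤ ⨆ z, √(∑' j, a z j ^ 2) := Real.iSup_nonneg fun z ↦ Real.sqrt_nonneg _
  -- Without this bound the supremum on the right could be the junk value `0`.
  have hbdd : BddAbove (Set.range fun z ↦ √(∑' j, a z j ^ 2)) := by
    refine ⟨√((K * W) ^ 2 / (1 - q ^ 2)), Set.forall_mem_range.2 fun z ↦ ?_⟩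
    exact Real.sqrt_le_sqrt (tsum_sq_le_of_le_geometric hq₀.le hq₁ (ha₀ z) (ha z))
  obtain ⟨N, hNW, hN⟩ := exists_pow_mul_le_one_and_sqrt_le hq₀ hq₁ W
  refine Real.iSup_le (fun z ↦ ?_) (add_nonneg hKq (by positivity))
  calc ∑' j, a z j
      ≤ √N * √(∑' j, a z j ^ 2) + K * W * q ^ N / (1 - q) :=
        tsum_le_sqrt_mul_sqrt_tsum_sq_add hq₀.le hq₁ (ha₀ z) (ha z) N
    _ = K / (1 - q) * (q ^ N * W) + √(∑' j, a z j ^ 2) * √N := by ring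
    _ ≤ K / (1 - q) * 1 +
        (⨆ z, √(∑' j, a z j ^ 2)) * (1 + √(logPlus W / Real.log q⁻¹)) := by
        gcongr
        exact le_ciSup hbdd z
    _ = _ := by rw [mul_one]

lemma exists_iSup_tsum_le_of_le_geometric {Z : Type*} (hK : 0 ≤ K) (hq₀ : 0 < q) (hq₁ : q < 1) :
    ∃ C : ℝ, 0 < C ∧ ∀ {a : Z → ℕ → ℝ} {W : ℝ}, (∀ z j, 0 ≤ a z j) →
      (∀ z j, a z j ≤ K * W * q ^ j) →
      ⨆ z, ∑' j, a z j ≤ C * (1 + (⨆ z, √(∑' j, a z j ^ 2)) * (1 + √(logPlus W))) := by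
  have hlog : 0 < Real.log q⁻¹ := Real.log_pos ((one_lt_inv₀ hq₀).2 hq₁)
  have hKq : 0 ≤ K / (1 - q) := div_nonneg hK (sub_nonneg.2 hq₁.le)
  have hrate : 0 ≤ 1 / √(Real.log q⁻¹) := by positivity
  obtain ⟨C, hC_one, hC_rate, hC_K⟩ : ∃ C, 1 ≤ C ∧ 1 / √(Real.log q⁻¹) ≤ C ∧ K / (1 - q) ≤ C :=
    ⟨1 + 1 / √(Real.log q⁻¹) + K / (1 - q), by linarith, by linarith, by linarith⟩
  refine ⟨C, by linarith, fun {a W} ha₀ ha ↦ ?_⟩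
  set S := ⨆ z, √(∑' j, a z j ^ 2)
  have hS : 0 ≤ S := Real.iSup_nonneg fun z ↦ Real.sqrt_nonneg _
  calc ⨆ z, ∑' j, a z j
      ≤ K / (1 - q) + S * (1 + √(logPlus W / Real.log q⁻¹)) :=
        iSup_tsum_le_of_le_geometric hK hq₀ hq₁ ha₀ ha
    _ = K / (1 - q) + S * (1 + 1 / √(Real.log q⁻¹) * √(logPlus W)) := by
        rw [Real.sqrt_div' _ hlog.le, one_div_mul_eq_div]
    _ ≤ C + S * (C + C * √(logPlus W)) := by gcongr
    _ = C * (1 + S * (1 + √(logPlus W))) := by ring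

end GeometricDecay

section Fourier

open scoped InnerProductSpace LineDeriv SchwartzMap

variable {V F : Type*} [NormedAddCommGroup V] [InnerProductSpace ℝ V] [FiniteDimensional ℝ V]
  [MeasurableSpace V] [BorelSpace V]

section Convolution

variable [NormedAddCommGroup F] [NormedSpace ℂ F]

lemma fourierInv_sub_eq_fourier_fourierChar_smul (ψ : V → F) (z w : V) :
    𝓕⁻ ψ (z - w) = 𝓕 (fun ξ ↦ 𝐞 ⟪ξ, z⟫_ℝ • ψ ξ) w := by
  simp only [Real.fourierInv_eq, Real.fourier_eq, smul_smul, ← AddChar.map_add_eq_mul,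
    inner_sub_right, neg_add_eq_sub]

lemma norm_integral_fourierInv_sub_smul_le [CompleteSpace F] {ψ : V → ℂ} {g : V → F}
    (hψ : Integrable ψ) (hg : Integrable g) (z : V) :
    ‖∫ w, 𝓕⁻ ψ (z - w) • g w‖ ≤ ∫ ξ, ‖ψ ξ‖ * ‖𝓕 g ξ‖ := by
  have hmod : Integrable fun ξ ↦ 𝐞 ⟪ξ, z⟫_ℝ • ψ ξ := by
    simpa using (Real.fourierIntegral_convergent_iff (-z)).2 hψ
  have hswap : ∫ w, 𝓕⁻ ψ (z - w) • g w = ∫ ξ, (𝐞 ⟪ξ, z⟫_ℝ • ψ ξ) • 𝓕 g ξ := by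
    simp_rw [fourierInv_sub_eq_fourier_fourierChar_smul]
    simpa using! VectorFourier.integral_fourierIntegral_smul_eq_flip (L := innerₗ V)
      Real.continuous_fourierChar continuous_inner hmod hg
  calc ‖∫ w, 𝓕⁻ ψ (z - w) • g w‖ ≤ ∫ ξ, ‖(𝐞 ⟪ξ, z⟫_ℝ • ψ ξ) • 𝓕 g ξ‖ :=
        hswap ▸ norm_integral_le_integral_norm _
    _ = ∫ ξ, ‖ψ ξ‖ * ‖𝓕 g ξ‖ := by simp only [norm_smul, Circle.norm_smul]

end Convolution

lemma setIntegral_norm_le_sqrt_measureReal_mul {α E : Type*} [MeasurableSpace α]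
    [NormedAddCommGroup E] {μ : Measure α} {f : α → E} {s : Set α} (hf : MemLp f 2 μ)
    (hs : μ s ≠ ∞) : ∫ x in s, ‖f x‖ ∂μ ≤ √(μ.real s) * (eLpNorm f 2 μ).toReal := by
  have hmeas : AEStronglyMeasurable f (μ.restrict s) := hf.aestronglyMeasurable.restrict
  have hholder : eLpNorm f 1 (μ.restrict s) ≤ eLpNorm f 2 μ * μ s ^ (1 / 2 : ℝ) := by
    calc eLpNorm f 1 (μ.restrict s)
        ≤ eLpNorm f 2 (μ.restrict s) * (μ.restrict s) Set.univ ^ (1 / 2 : ℝ) := by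
          convert eLpNorm_le_eLpNorm_mul_rpow_measure_univ one_le_two hmeas using 3
          norm_num
      _ ≤ eLpNorm f 2 μ * μ s ^ (1 / 2 : ℝ) := by
          rw [Measure.restrict_apply_univ]
          gcongr
          exact Measure.restrict_le_self
  calc ∫ x in s, ‖f x‖ ∂μ = (eLpNorm f 1 (μ.restrict s)).toReal := by
        rw [eLpNorm_one_eq_lintegral_enorm, integral_norm_eq_lintegral_enorm hmeas]
    _ ≤ (eLpNorm f 2 μ * μ s ^ (1 / 2 : ℝ)).toReal :=
        ENNReal.toReal_mono (ENNReal.mul_ne_top hf.eLpNorm_ne_top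
          (ENNReal.rpow_ne_top_of_nonneg (by norm_num) hs)) hholder
    _ = √(μ.real s) * (eLpNorm f 2 μ).toReal := by
        rw [ENNReal.toReal_mul, ← ENNReal.toReal_rpow, ← Real.sqrt_eq_rpow, mul_comm,
          measureReal_def]

section Derivative

variable [NormedAddCommGroup F]

lemma fourier_iterate_lineDerivOp_apply [NormedSpace ℂ F] (f : 𝓢(V, F)) (v : V) (N : ℕ) (ξ : V) :
    𝓕 (∂_{v}^[N] f) ξ = (2 * π * Complex.I * ⟪ξ, v⟫_ℝ) ^ N • 𝓕 f ξ := by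
  induction N with
  | zero => simp
  | succ N ih =>
    rw [Function.iterate_succ_apply', SchwartzMap.fourier_lineDerivOp_eq, smul_apply,
      SchwartzMap.smulLeftCLM_apply_apply (by fun_prop), ih, pow_succ', ← Complex.coe_smul,
      smul_smul, smul_smul]

lemma abs_inner_pow_mul_norm_fourier_le [NormedSpace ℂ F] (f : 𝓢(V, F)) (v : V) (N : ℕ) (ξ : V) :
    |⟪ξ, v⟫_ℝ| ^ N * ‖𝓕 f ξ‖ ≤ ‖𝓕 (∂_{v}^[N] f) ξ‖ := by
  have htwo_pi : 1 ≤ 2 * π := by linarith [Real.two_le_pi]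
  calc |⟪ξ, v⟫_ℝ| ^ N * ‖𝓕 f ξ‖ ≤ (2 * π * |⟪ξ, v⟫_ℝ|) ^ N * ‖𝓕 f ξ‖ := by
        gcongr
        exact le_mul_of_one_le_left (abs_nonneg _) htwo_pi
    _ = ‖𝓕 (∂_{v}^[N] f) ξ‖ := by
        rw [fourier_iterate_lineDerivOp_apply, norm_smul]
        simp [abs_of_pos Real.pi_pos]

lemma integrable_abs_inner_pow_mul_norm_fourier [NormedSpace ℂ F] (f : 𝓢(V, F)) (v : V) (N : ℕ) :
    Integrable fun ξ ↦ |⟪ξ, v⟫_ℝ| ^ N * ‖𝓕 f ξ‖ := by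
  have hcont : Continuous (𝓕 f : 𝓢(V, F)) := (𝓕 f).continuous
  refine (𝓕 (∂_{v}^[N] f)).integrable.mono (by fun_prop) (.of_forall fun ξ ↦ ?_)
  rw [Real.norm_of_nonneg (by positivity)]
  exact abs_inner_pow_mul_norm_fourier_le f v N ξ

lemma setIntegral_norm_fourier_le [InnerProductSpace ℂ F] [CompleteSpace F] (f : 𝓢(V, F))
    {s : Set V} (hs : volume s ≠ ∞) :
    ∫ ξ in s, ‖𝓕 f ξ‖ ≤ √(volume.real s) * ‖f.toLp 2‖ := by
  rw [← SchwartzMap.norm_fourier_toL2_eq, SchwartzMap.norm_toLp]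
  exact setIntegral_norm_le_sqrt_measureReal_mul (SchwartzMap.memLp _ _ _) hs

lemma setIntegral_abs_inner_pow_mul_norm_fourier_le [InnerProductSpace ℂ F] [CompleteSpace F]
    (f : 𝓢(V, F)) (v : V) (N : ℕ) {s : Set V} (hs : volume s ≠ ∞) :
    ∫ ξ in s, |⟪ξ, v⟫_ℝ| ^ N * ‖𝓕 f ξ‖ ≤ √(volume.real s) * ‖(∂_{v}^[N] f).toLp 2‖ := by
  refine le_trans ?_ (setIntegral_norm_fourier_le _ hs)
  refine setIntegral_mono ?_ ?_ (abs_inner_pow_mul_norm_fourier_le f v N)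
  · exact (integrable_abs_inner_pow_mul_norm_fourier f v N).integrableOn
  · exact (𝓕 (∂_{v}^[N] f)).integrable.norm.integrableOn

end Derivative

end Fourier

section ParabolicGeometry

variable {n : ℕ} {z : PSpace n} {R : ℝ}

/-- The exponents `a = (1, …, 1, 2)` of the anisotropic dilation. -/
def parabolicWeight (k : Fin (n + 1)) : ℕ := if k = Fin.last n then 2 else 1

@[simp] lemma parabolicWeight_last : parabolicWeight (Fin.last n) = 2 := if_pos rfl

@[simp] lemma parabolicWeight_castSucc (i : Fin n) : parabolicWeight i.castSucc = 1 :=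
  if_neg (Fin.castSucc_ne_last i)

lemma parabolicWeight_dvd_two (k : Fin (n + 1)) : parabolicWeight k ∣ 2 := by
  rw [parabolicWeight]
  split_ifs <;> norm_num

lemma pnorm_le_iff (hR : 0 ≤ R) : pnorm z ≤ R ↔ ∀ k, |z k| ≤ R ^ parabolicWeight k := by
  simp only [pnorm, max_le_iff, Real.sqrt_le_left hR, Fin.forall_fin_succ', parabolicWeight_last,
    parabolicWeight_castSucc, pow_one]
  refine and_congr_left' ⟨fun h i ↦ ?_, fun h ↦ Real.iSup_le h hR⟩
  exact (le_ciSup (f := fun i : Fin n ↦ |z i.castSucc|) (Set.finite_range _).bddAbove i).trans h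

lemma pow_le_sum_abs_pow_of_lt_pnorm (hR : 0 ≤ R) (h : R < pnorm z) (m : ℕ) :
    R ^ (2 * m) ≤ ∑ k, |z k| ^ (2 * m / parabolicWeight k) := by
  obtain ⟨k, hk⟩ : ∃ k, R ^ parabolicWeight k < |z k| := by
    simpa [pnorm_le_iff hR] using h.not_ge
  calc R ^ (2 * m) = (R ^ parabolicWeight k) ^ (2 * m / parabolicWeight k) := by
        rw [← pow_mul, Nat.mul_div_cancel' ((parabolicWeight_dvd_two k).mul_right m)]
    _ ≤ |z k| ^ (2 * m / parabolicWeight k) := by gcongr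
    _ ≤ ∑ k, |z k| ^ (2 * m / parabolicWeight k) :=
        Finset.single_le_sum (f := fun k ↦ |z k| ^ (2 * m / parabolicWeight k))
          (fun _ _ ↦ by positivity) (Finset.mem_univ k)

lemma volume_setOf_pnorm_le (hR : 0 ≤ R) :
    volume {z : PSpace n | pnorm z ≤ R} = ENNReal.ofReal (2 ^ (n + 1) * R ^ (n + 2)) := by
  have hbox : {z : PSpace n | pnorm z ≤ R} = WithLp.ofLp ⁻¹' Set.univ.pi fun k : Fin (n + 1) ↦
      Set.Icc (-R ^ parabolicWeight k) (R ^ parabolicWeight k) := by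
    ext z
    simp [pnorm_le_iff hR, abs_le, -Set.pi_univ_Icc]
  rw [hbox, (PiLp.volume_preserving_ofLp (Fin (n + 1))).measure_preimage
    (MeasurableSet.univ_pi fun _ ↦ measurableSet_Icc).nullMeasurableSet, volume_pi_pi]
  simp only [Real.volume_Icc, sub_neg_eq_add, ← two_mul]
  rw [← ENNReal.ofReal_prod_of_nonneg fun k _ ↦ by positivity, Fin.prod_univ_castSucc]
  simp only [parabolicWeight_castSucc, parabolicWeight_last, Finset.prod_const, Finset.card_univ,
    Fintype.card_fin]
  congr 1
  ring

lemma volume_setOf_pnorm_le_ne_top (hR : 0 ≤ R) : volume {z : PSpace n | pnorm z ≤ R} ≠ ∞ := by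
  rw [volume_setOf_pnorm_le hR]
  exact ENNReal.ofReal_ne_top

lemma pnorm_pdil {η : ℝ} (hη : 0 ≤ η) (z : PSpace n) : pnorm (pdil η z) = η * pnorm z := by
  rw [pnorm, pnorm, mul_max_of_nonneg _ _ hη, Real.mul_iSup_of_nonneg hη]
  simp [pdil, Fin.castSucc_ne_last, abs_mul, abs_of_nonneg hη, Real.sqrt_sq hη]

lemma continuous_pdil (η : ℝ) : Continuous (pdil η : PSpace n → PSpace n) := by
  refine (ContinuousLinearEquiv.continuous _).comp (continuous_pi fun k ↦ ?_)
  split_ifs <;> fun_prop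

end ParabolicGeometry

section DyadicPieces

variable {n : ℕ} {ψ₀ : PSpace n → ℝ} {M : ℝ}

lemma psiJ_succ_apply (ψ₀ : PSpace n → ℝ) (j : ℕ) (ξ : PSpace n) :
    psiJ ψ₀ (j + 1) ξ = ψ₀ (pdil (2 ^ (j + 1))⁻¹ ξ) - ψ₀ (pdil (2 ^ j)⁻¹ ξ) := by
  rw [psiJ, ← Nat.cast_succ]
  simp only [Real.rpow_neg zero_le_two, Real.rpow_natCast, Nat.succ_eq_add_one]

lemma psiJ_succ_eq_zero_of_pnorm_le (hone : ∀ z, pnorm z ≤ 1 → ψ₀ z = 1) {j : ℕ} {ξ : PSpace n}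
    (hξ : pnorm ξ ≤ 2 ^ j) : psiJ ψ₀ (j + 1) ξ = 0 := by
  have hξ' : pnorm ξ ≤ 2 ^ (j + 1) := hξ.trans (pow_le_pow_right₀ one_le_two j.le_succ)
  have hdil {i : ℕ} (hi : pnorm ξ ≤ 2 ^ i) : ψ₀ (pdil (2 ^ i)⁻¹ ξ) = 1 := by
    apply hone
    rwa [pnorm_pdil (by positivity), inv_mul_le_iff₀ (by positivity), mul_one]
  rw [psiJ_succ_apply, hdil hξ, hdil hξ', sub_self]

lemma psiJ_succ_eq_zero_of_le_pnorm (hzero : ∀ z, 2 ≤ pnorm z → ψ₀ z = 0) {j : ℕ} {ξ : PSpace n}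
    (hξ : 2 ^ (j + 2) ≤ pnorm ξ) : psiJ ψ₀ (j + 1) ξ = 0 := by
  have hξ' : 2 ^ (j + 1) ≤ pnorm ξ :=
    (pow_le_pow_right₀ one_le_two (j + 1).le_succ).trans hξ
  have hdil {i : ℕ} (hi : 2 ^ (i + 1) ≤ pnorm ξ) : ψ₀ (pdil (2 ^ i)⁻¹ ξ) = 0 := by
    apply hzero
    rwa [pnorm_pdil (by positivity), le_inv_mul_iff₀ (by positivity), ← pow_succ]
  rw [psiJ_succ_apply, hdil hξ, hdil hξ', sub_self]

lemma abs_psiJ_succ_le (hM : ∀ z, |ψ₀ z| ≤ M) (j : ℕ) (ξ : PSpace n) :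
    |psiJ ψ₀ (j + 1) ξ| ≤ 2 * M := by
  rw [psiJ_succ_apply, two_mul]
  exact (abs_sub _ _).trans (add_le_add (hM _) (hM _))

lemma abs_psiJ_succ_le_sum (hM : ∀ z, |ψ₀ z| ≤ M) (hone : ∀ z, pnorm z ≤ 1 → ψ₀ z = 1)
    (m j : ℕ) (ξ : PSpace n) :
    |psiJ ψ₀ (j + 1) ξ| ≤ 2 * M / (2 ^ j) ^ (2 * m) * ∑ k, |ξ k| ^ (2 * m / parabolicWeight k) := by
  have hM₀ : 0 ≤ M := (abs_nonneg _).trans (hM 0)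
  rcases le_or_gt (pnorm ξ) (2 ^ j) with hξ | hξ
  · rw [psiJ_succ_eq_zero_of_pnorm_le hone hξ, abs_zero]
    positivity
  · calc |psiJ ψ₀ (j + 1) ξ| ≤ 2 * M := abs_psiJ_succ_le hM j ξ
      _ = 2 * M / (2 ^ j) ^ (2 * m) * (2 ^ j) ^ (2 * m) := by field_simp
      _ ≤ 2 * M / (2 ^ j) ^ (2 * m) * ∑ k, |ξ k| ^ (2 * m / parabolicWeight k) := by
          gcongr
          exact pow_le_sum_abs_pow_of_lt_pnorm (by positivity) hξ m

lemma measurable_psiJ_succ (hmeas : Measurable ψ₀) (j : ℕ) : Measurable (psiJ ψ₀ (j + 1)) :=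
  (hmeas.comp (continuous_pdil _).measurable).sub (hmeas.comp (continuous_pdil _).measurable)

lemma integrable_psiJ_succ (hmeas : Measurable ψ₀) (hM : ∀ z, |ψ₀ z| ≤ M)
    (hzero : ∀ z, 2 ≤ pnorm z → ψ₀ z = 0) (j : ℕ) : Integrable (psiJ ψ₀ (j + 1)) := by
  have hsupp : Function.support (psiJ ψ₀ (j + 1)) ⊆ {ξ | pnorm ξ ≤ 2 ^ (j + 2)} := fun ξ hξ ↦
    le_of_not_ge fun h ↦ hξ (psiJ_succ_eq_zero_of_le_pnorm hzero h)
  rw [← integrableOn_iff_integrable_of_support_subset hsupp]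
  exact Measure.integrableOn_of_bounded (volume_setOf_pnorm_le_ne_top (by positivity))
    (measurable_psiJ_succ hmeas j).aestronglyMeasurable (.of_forall (abs_psiJ_succ_le hM j))

end DyadicPieces

section Complexification

open scoped LineDeriv SchwartzMap

variable {E F G : Type*} [NormedAddCommGroup E] [NormedSpace ℝ E] [NormedAddCommGroup F]
  [NormedSpace ℝ F] [NormedAddCommGroup G] [NormedSpace ℝ G]

lemma lineDerivOp_postcompCLM (L : F →L[ℝ] G) (v : E) (f : 𝓢(E, F)) :
    ∂_{v} (f.postcompCLM L) = (∂_{v} f).postcompCLM L := by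
  ext z
  exact congr($((L.hasFDerivAt.comp z (f.hasFDerivAt z)).fderiv) v)

/-- A real-valued Schwartz function regarded as complex-valued, so that its Fourier transform
is available. -/
def complexify (u : 𝓢(E, ℝ)) : 𝓢(E, ℂ) := u.postcompCLM Complex.ofRealCLM

lemma complexify_iterate_lineDerivOp (v : E) (N : ℕ) (u : 𝓢(E, ℝ)) :
    complexify (∂_{v}^[N] u) = ∂_{v}^[N] (complexify u) :=
  Function.Semiconj.iterate_right (f := complexify) (ga := ∂_{v}) (gb := ∂_{v})
    (fun u ↦ (lineDerivOp_postcompCLM _ v u).symm) N u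

end Complexification

section SobolevNorm

open scoped LineDeriv SchwartzMap

variable {n : ℕ}

lemma norm_toLp_complexify (u : 𝓢(PSpace n, ℝ)) : ‖(complexify u).toLp 2‖ = L2norm Set.univ u := by
  rw [SchwartzMap.norm_toLp, L2norm, Measure.restrict_univ]
  exact congrArg _ (eLpNorm_congr_norm_ae (.of_forall fun z ↦ Complex.norm_real (u z)))

lemma foldr_iterate_eq_self {ι X : Type*} {α : ι → ℕ} {l : List ι} (h : ∀ i ∈ l, α i = 0)
    (f : ι → X → X) (x : X) : l.foldr (fun i ↦ (f i)^[α i]) x = x := by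
  induction l with
  | nil => rfl
  | cons i l ih =>
    rw [List.forall_mem_cons] at h
    rw [List.foldr_cons, ih h.2, h.1, Function.iterate_zero_apply]

lemma foldr_iterate_single {ι X : Type*} [DecidableEq ι] {l : List ι} (hl : l.Nodup) {i : ι}
    (hi : i ∈ l) (N : ℕ) (f : ι → X → X) (x : X) :
    l.foldr (fun j ↦ (f j)^[(Pi.single i N : ι → ℕ) j]) x = (f i)^[N] x := by
  induction l with
  | nil => simp at hi
  | cons j l ih =>
    obtain ⟨hj, hl⟩ := List.nodup_cons.1 hl
    rw [List.foldr_cons]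
    obtain rfl | hi := List.mem_cons.1 hi
    · have hzero (k : ι) (hk : k ∈ l) : (Pi.single i N : ι → ℕ) k = 0 :=
        Pi.single_eq_of_ne (M := fun _ ↦ ℕ) (ne_of_mem_of_not_mem hk hj) N
      rw [foldr_iterate_eq_self hzero, Pi.single_eq_same]
    · rw [ih hl hi, Pi.single_eq_of_ne (ne_of_mem_of_not_mem hi hj).symm,
        Function.iterate_zero_apply]

lemma DxPow_zero (u : PSpace n → ℝ) : DxPow 0 u = u :=
  foldr_iterate_eq_self (fun _ _ ↦ rfl) Dx u

lemma DxPow_single (i : Fin n) (N : ℕ) (u : PSpace n → ℝ) :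
    DxPow (Pi.single i N) u = (Dx i)^[N] u :=
  foldr_iterate_single (List.nodup_finRange n) (List.mem_finRange i) N Dx u

lemma coe_iterate_lineDerivOp_last (N : ℕ) (u : 𝓢(PSpace n, ℝ)) :
    ⇑(∂_{(EuclideanSpace.single (Fin.last n) (1 : ℝ) : PSpace n)}^[N] u) = Dt^[N] u :=
  Function.Semiconj.iterate_right (f := fun u : 𝓢(PSpace n, ℝ) ↦ ⇑u) (fun _ ↦ rfl) N u

lemma coe_iterate_lineDerivOp_castSucc (i : Fin n) (N : ℕ) (u : 𝓢(PSpace n, ℝ)) :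
    ⇑(∂_{(EuclideanSpace.single i.castSucc (1 : ℝ) : PSpace n)}^[N] u) = (Dx i)^[N] u :=
  Function.Semiconj.iterate_right (f := fun u : 𝓢(PSpace n, ℝ) ↦ ⇑u) (fun _ ↦ rfl) N u

lemma L2norm_nonneg (O : Set (PSpace n)) (v : PSpace n → ℝ) : 0 ≤ L2norm O v :=
  ENNReal.toReal_nonneg

lemma L2norm_mixDeriv_le_sobNorm {m r : ℕ} {α : Fin n → ℕ} (h : 2 * r + ∑ i, α i ≤ 2 * m)
    (O : Set (PSpace n)) (u : PSpace n → ℝ) : L2norm O (mixDeriv r α u) ≤ sobNorm m O u := by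
  calc L2norm O (mixDeriv r α u)
      ≤ ∑ β ∈ Finset.Nat.antidiagonalTuple n (∑ i, α i), L2norm O (mixDeriv r β u) :=
        Finset.single_le_sum (f := fun β ↦ L2norm O (mixDeriv r β u))
          (fun _ _ ↦ L2norm_nonneg _ _) (Finset.Nat.mem_antidiagonalTuple.2 rfl)
    _ ≤ sobNorm m O u := by
        refine Finset.single_le_sum (a := (r, ∑ i, α i))
          (f := fun p : ℕ × ℕ ↦ ∑ β ∈ Finset.Nat.antidiagonalTuple n p.2,
            L2norm O (mixDeriv p.1 β u))
          (fun _ _ ↦ Finset.sum_nonneg fun _ _ ↦ L2norm_nonneg _ _) ?_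
        rw [Finset.mem_filter, Finset.mem_product, Finset.mem_range, Finset.mem_range]
        lia

lemma L2norm_iterate_lineDerivOp_le_sobNorm {m N : ℕ} {k : Fin (n + 1)}
    (h : parabolicWeight k * N ≤ 2 * m) (O : Set (PSpace n)) (u : 𝓢(PSpace n, ℝ)) :
    L2norm O ⇑(∂_{(EuclideanSpace.single k (1 : ℝ) : PSpace n)}^[N] u) ≤ sobNorm m O u := by
  induction k using Fin.lastCases with
  | last =>
    rw [parabolicWeight_last] at h
    rw [coe_iterate_lineDerivOp_last]
    simpa only [mixDeriv, DxPow_zero] using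
      L2norm_mixDeriv_le_sobNorm (r := N) (α := 0) (by simpa using h) O u
  | cast i =>
    rw [parabolicWeight_castSucc] at h
    rw [coe_iterate_lineDerivOp_castSucc, ← DxPow_single]
    exact L2norm_mixDeriv_le_sobNorm (r := 0) (by simpa using h) O u

end SobolevNorm

section Multiplier

open scoped LineDeriv SchwartzMap

variable {n : ℕ}

lemma norm_pconv_fourierInv_le_integral {ψ : PSpace n → ℂ} (hψ : Integrable ψ)
    (u : 𝓢(PSpace n, ℝ)) (z : PSpace n) :
    ‖pconv (𝓕⁻ ψ) u z‖ ≤ ∫ ξ, ‖ψ ξ‖ * ‖𝓕 (complexify u) ξ‖ :=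
  norm_integral_fourierInv_sub_smul_le hψ (complexify u).integrable z

lemma integrable_abs_coord_pow_mul_norm_fourier (k : Fin (n + 1)) (N : ℕ) (u : 𝓢(PSpace n, ℝ)) :
    Integrable fun ξ ↦ |ξ k| ^ N * ‖𝓕 (complexify u) ξ‖ := by
  simpa [EuclideanSpace.inner_single_right] using
    integrable_abs_inner_pow_mul_norm_fourier (complexify u) (EuclideanSpace.single k 1) N

lemma setIntegral_abs_coord_pow_mul_norm_fourier_le {m N : ℕ} {k : Fin (n + 1)}
    (h : parabolicWeight k * N ≤ 2 * m) {R : ℝ} (hR : 0 ≤ R) (u : 𝓢(PSpace n, ℝ)) :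
    ∫ ξ in {ξ | pnorm ξ ≤ R}, |ξ k| ^ N * ‖𝓕 (complexify u) ξ‖ ≤
      √(2 ^ (n + 1) * R ^ (n + 2)) * sobNorm m Set.univ u := by
  have hplancherel := setIntegral_abs_inner_pow_mul_norm_fourier_le (complexify u)
    (EuclideanSpace.single k 1) N (volume_setOf_pnorm_le_ne_top hR)
  rw [← complexify_iterate_lineDerivOp, norm_toLp_complexify, measureReal_def,
    volume_setOf_pnorm_le hR, ENNReal.toReal_ofReal (by positivity)] at hplancherel
  simp only [EuclideanSpace.inner_single_right, one_mul, conj_trivial] at hplancherel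
  refine hplancherel.trans ?_
  gcongr
  exact L2norm_iterate_lineDerivOp_le_sobNorm h Set.univ u

lemma norm_pconv_fourierInv_le {ψ : PSpace n → ℂ} (hψ : Integrable ψ) {A R : ℝ} {m : ℕ}
    (hA : 0 ≤ A) (hR : 0 ≤ R) (hsupp : ∀ ξ, R < pnorm ξ → ψ ξ = 0)
    (hbound : ∀ ξ, ‖ψ ξ‖ ≤ A * ∑ k, |ξ k| ^ (2 * m / parabolicWeight k))
    (u : 𝓢(PSpace n, ℝ)) (z : PSpace n) :
    ‖pconv (𝓕⁻ ψ) u z‖ ≤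
      A * ((n + 1) * (√(2 ^ (n + 1) * R ^ (n + 2)) * sobNorm m Set.univ u)) := by
  have hint (k : Fin (n + 1)) : IntegrableOn
      (fun ξ ↦ |ξ k| ^ (2 * m / parabolicWeight k) * ‖𝓕 (complexify u) ξ‖) {ξ | pnorm ξ ≤ R} :=
    (integrable_abs_coord_pow_mul_norm_fourier k _ u).integrableOn
  calc ‖pconv (𝓕⁻ ψ) u z‖ ≤ ∫ ξ, ‖ψ ξ‖ * ‖𝓕 (complexify u) ξ‖ :=
        norm_pconv_fourierInv_le_integral hψ u z
    _ = ∫ ξ in {ξ | pnorm ξ ≤ R}, ‖ψ ξ‖ * ‖𝓕 (complexify u) ξ‖ := by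
        refine (setIntegral_eq_integral_of_forall_compl_eq_zero fun ξ hξ ↦ ?_).symm
        rw [hsupp ξ (not_le.1 hξ), norm_zero, zero_mul]
    _ ≤ ∫ ξ in {ξ | pnorm ξ ≤ R},
          A * ∑ k, |ξ k| ^ (2 * m / parabolicWeight k) * ‖𝓕 (complexify u) ξ‖ := by
        refine integral_mono_of_nonneg (.of_forall fun ξ ↦ by positivity)
          ((integrable_finsetSum _ fun k _ ↦ hint k).const_mul A) (.of_forall fun ξ ↦ ?_)
        simp only [← Finset.sum_mul, ← mul_assoc]
        exact mul_le_mul_of_nonneg_right (hbound ξ) (norm_nonneg _)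
    _ = A * ∑ k, ∫ ξ in {ξ | pnorm ξ ≤ R},
          |ξ k| ^ (2 * m / parabolicWeight k) * ‖𝓕 (complexify u) ξ‖ := by
        rw [integral_const_mul, integral_finsetSum _ fun k _ ↦ hint k]
    _ ≤ A * ∑ _k : Fin (n + 1), √(2 ^ (n + 1) * R ^ (n + 2)) * sobNorm m Set.univ u := by
        gcongr with k
        exact setIntegral_abs_coord_pow_mul_norm_fourier_le (Nat.mul_div_le _ _) hR u
    _ = A * ((n + 1) * (√(2 ^ (n + 1) * R ^ (n + 2)) * sobNorm m Set.univ u)) := by simp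

end Multiplier

section LogarithmicSobolev

open scoped SchwartzMap

variable {n m : ℕ} {ψ₀ : PSpace n → ℝ} {M : ℝ}

/-- The ratio `2^{(n+2)/2 - 2m}` at which `‖φ_j * u‖_∞` decays when `u ∈ W₂^{2m,m}`. -/
def dyadicDecay (n m : ℕ) : ℝ := √(2 ^ (n + 2)) / 2 ^ (2 * m)

lemma dyadicDecay_pos (n m : ℕ) : 0 < dyadicDecay n m := by
  unfold dyadicDecay
  positivity

lemma dyadicDecay_lt_one (hmn : ((n : ℝ) + 2) / 4 < m) : dyadicDecay n m < 1 := by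
  have hlt : n + 2 < 2 * m * 2 := by
    have : (n + 2 : ℝ) < 2 * m * 2 := by linarith
    exact_mod_cast this
  rw [dyadicDecay, div_lt_one (by positivity), Real.sqrt_lt' (by positivity), ← pow_mul]
  exact pow_lt_pow_right₀ one_lt_two hlt

-- `2 ^ (3 * n + 5) = 2 ^ (n + 1) * 4 ^ (n + 2)` is the volume of the parabolic ball of radius `4`.
lemma norm_pconv_phiJ_succ_le (hmeas : Measurable ψ₀) (hM : ∀ z, |ψ₀ z| ≤ M)
    (hone : ∀ z, pnorm z ≤ 1 → ψ₀ z = 1) (hzero : ∀ z, 2 ≤ pnorm z → ψ₀ z = 0)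
    (u : 𝓢(PSpace n, ℝ)) (z : PSpace n) (j : ℕ) :
    ‖pconv (phiJ ψ₀ (j + 1)) u z‖ ≤
      2 * M * (n + 1) * √(2 ^ (3 * n + 5)) * sobNorm m Set.univ u * dyadicDecay n m ^ j := by
  have hM₀ : 0 ≤ M := (abs_nonneg _).trans (hM 0)
  have hsqrt : √(2 ^ (n + 1) * (2 ^ (j + 2)) ^ (n + 2) : ℝ) =
      √(2 ^ (3 * n + 5)) * √(2 ^ (n + 2)) ^ j := by
    rw [Real.sqrt_eq_iff_mul_self_eq (by positivity) (by positivity), mul_mul_mul_comm,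
      Real.mul_self_sqrt (by positivity), ← mul_pow, Real.mul_self_sqrt (by positivity)]
    simp only [← pow_mul, ← pow_add]
    congr 1
    ring
  calc ‖pconv (phiJ ψ₀ (j + 1)) u z‖
      ≤ 2 * M / (2 ^ j) ^ (2 * m) * ((n + 1) *
          (√(2 ^ (n + 1) * (2 ^ (j + 2)) ^ (n + 2)) * sobNorm m Set.univ u)) := by
        refine norm_pconv_fourierInv_le (integrable_psiJ_succ hmeas hM hzero j).ofReal
          (by positivity) (by positivity) (fun ξ hξ ↦ ?_) (fun ξ ↦ ?_) u z
        · simp [psiJ_succ_eq_zero_of_le_pnorm hzero hξ.le]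
        · simpa using abs_psiJ_succ_le_sum hM hone m j ξ
    _ = 2 * M * (n + 1) * √(2 ^ (3 * n + 5)) * sobNorm m Set.univ u *
          dyadicDecay n m ^ j := by
        rw [hsqrt, dyadicDecay]
        ring

theorem basic_log_sobolev_inequality_general (n m : ℕ) (hmn : ((n : ℝ) + 2) / 4 < m)
    (ψ₀ : PSpace n → ℝ) (hmeas : Measurable ψ₀) (M : ℝ) (hM : ∀ z, |ψ₀ z| ≤ M)
    (hone : ∀ z, pnorm z ≤ 1 → ψ₀ z = 1) (hzero : ∀ z, 2 ≤ pnorm z → ψ₀ z = 0) :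
    ∃ C : ℝ, 0 < C ∧ ∀ u : SchwartzMap (PSpace n) ℝ,
      F01norm ψ₀ ⇑u ≤ C * (1 + F02norm ψ₀ ⇑u *
        (1 + Real.sqrt (logPlus (sobNorm m Set.univ ⇑u)))) := by
  have hM₀ : 0 ≤ M := (abs_nonneg _).trans (hM 0)
  obtain ⟨C, hC₀, hC⟩ := exists_iSup_tsum_le_of_le_geometric (Z := PSpace n)
    (K := 2 * M * (n + 1) * √(2 ^ (3 * n + 5))) (by positivity)
    (dyadicDecay_pos n m) (dyadicDecay_lt_one hmn)
  exact ⟨C, hC₀, fun u ↦ hC (fun _ _ ↦ norm_nonneg _)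
    fun z j ↦ norm_pconv_phiJ_succ_le hmeas hM hone hzero u z j⟩

end LogarithmicSobolev

/-- **Basic logarithmic Sobolev inequality** (Lemma 2.9):
`‖u‖_{F̃⁰_{∞,1}} ≤ C (1 + ‖u‖_{F̃⁰_{∞,2}} (1 + (log⁺ ‖u‖_{W₂^{2m,m}})^{1/2}))`. -/
theorem basic_log_sobolev_inequality (n m : ℕ) (hn : 1 ≤ n) (hm : 0 < m)
    (hmn : ((n : ℝ) + 2) / 4 < m) (ψ₀ : PSpace n → ℝ) (hψ : IsCutoff ψ₀) :
    ∃ C : ℝ, 0 < C ∧ ∀ u : SchwartzMap (PSpace n) ℝ,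
      F01norm ψ₀ ⇑u ≤ C * (1 + F02norm ψ₀ ⇑u *
        (1 + Real.sqrt (logPlus (sobNorm m Set.univ ⇑u)))) := by
  obtain ⟨M, hM⟩ := hψ.compact_support.exists_bound_of_continuous hψ.smooth.continuous
  exact basic_log_sobolev_inequality_general n m hmn ψ₀ hψ.smooth.continuous.measurable M hM
    hψ.eq_one hψ.eq_zero

end
end

section
/- Let n ≥ 1 and let m be a positive integer with m > (n+2)/4. Then there exists a constant C = C(m,n) > 0 such that for every Schwartz function u on ℝ^{n+1} and every parabolic cube Q of radius 2 in ℝ^{n+1}, |u_Q| ≤ C (1 + ‖u‖_{BMOₚ(ℝ^{n+1})} (1 + log⁺ ‖u‖_{W₂^{2m,m}(ℝ^{n+1})})). -/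
open MeasureTheory Real
open scoped FourierTransform ENNReal

noncomputable section

/-! By Hölder's inequality the mean over a cube of radius `R` is at most `‖u‖₂ |Q_R|^{-1/2}`. Since
`|Q_R| ≥ R²` for `R ≥ 1`, it is at most `1` as soon as `R ≥ max 1 ‖u‖₂`. Each doubling of the
radius moves the mean by at most a multiple of the BMO norm, so reaching such an `R` from a given
radius takes about `log₂ ‖u‖₂` doublings and costs a multiple of `‖u‖_{BMOₚ} (1 + log⁺ ‖u‖₂)`.
The Sobolev norm dominates `‖u‖₂`. -/

section Average

variable {X E : Type*} [MeasurableSpace X] {μ : Measure X} [NormedAddCommGroup E]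
  [NormedSpace ℝ E] {f : X → E} {s t : Set X}

theorem norm_average_le_of_ae_norm_le {C : ℝ} (hC : 0 ≤ C) (hf : ∀ᵐ x ∂μ, ‖f x‖ ≤ C) :
    ‖⨍ x, f x ∂μ‖ ≤ C := by
  rcases (measureReal_nonneg (μ := μ) (s := Set.univ)).eq_or_lt with hμ | hμ
  · simpa [average_eq, ← hμ] using hC
  · have : IsFiniteMeasure μ := ⟨(ENNReal.toReal_pos_iff.1 hμ).2⟩
    rw [average_eq, norm_smul, norm_inv, Real.norm_of_nonneg hμ.le, inv_mul_le_iff₀ hμ, mul_comm]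
    exact norm_integral_le_of_norm_le_const hf

theorem norm_setAverage_sub_le [CompleteSpace E] (hst : s ⊆ t) (hs : μ s ≠ 0) (ht : μ t ≠ ∞)
    (hf : IntegrableOn f t μ) (c : E) :
    ‖(⨍ x in s, f x ∂μ) - c‖ ≤ μ.real t / μ.real s * ⨍ x in t, ‖f x - c‖ ∂μ := by
  have hs' : μ s ≠ ∞ := measure_ne_top_of_subset hst ht
  have hs_pos : 0 < μ.real s := ENNReal.toReal_pos hs hs'
  have ht_pos : 0 < μ.real t := hs_pos.trans_le (measureReal_mono hst ht)
  have hfc : IntegrableOn (fun x => f x - c) t μ := hf.sub (integrableOn_const ht)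
  have hmean : (⨍ x in s, f x ∂μ) - c = (μ.real s)⁻¹ • ∫ x in s, (f x - c) ∂μ := by
    rw [integral_sub (hf.mono_set hst) (integrableOn_const hs'), setIntegral_const, smul_sub,
      inv_smul_smul₀ hs_pos.ne', setAverage_eq]
  calc ‖(⨍ x in s, f x ∂μ) - c‖
      = (μ.real s)⁻¹ * ‖∫ x in s, (f x - c) ∂μ‖ := by
        rw [hmean, norm_smul, norm_inv, Real.norm_of_nonneg hs_pos.le]
    _ ≤ (μ.real s)⁻¹ * ∫ x in t, ‖f x - c‖ ∂μ := by
        gcongr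
        exact (norm_integral_le_integral_norm _).trans <| setIntegral_mono_set hfc.norm
          (.of_forall fun _ => norm_nonneg _) hst.eventuallyLE
    _ = μ.real t / μ.real s * ⨍ x in t, ‖f x - c‖ ∂μ := by
        rw [setAverage_eq, smul_eq_mul]
        field_simp

theorem norm_setIntegral_le_eLpNorm_mul_rpow {p : ℝ≥0∞} (hp : 1 ≤ p) (hf : MemLp f p μ)
    (hs : μ s ≠ ∞) :
    ‖∫ x in s, f x ∂μ‖ ≤ (eLpNorm f p μ).toReal * μ.real s ^ (1 - 1 / p.toReal) := by
  have hexp : 0 ≤ 1 - 1 / p.toReal := by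
    rcases eq_or_ne p ∞ with rfl | hp'
    · simp
    · have : 1 ≤ p.toReal := by simpa using ENNReal.toReal_mono hp' hp
      exact sub_nonneg.2 (div_le_one_of_le₀ this (zero_le_one.trans this))
  have holder : eLpNorm f 1 (μ.restrict s) ≤ eLpNorm f p μ * μ s ^ (1 - 1 / p.toReal) := by
    have := eLpNorm_le_eLpNorm_mul_rpow_measure_univ (μ := μ.restrict s) hp
      hf.aestronglyMeasurable.restrict
    simp only [Measure.restrict_apply_univ, ENNReal.toReal_one, div_one] at this
    exact this.trans (by gcongr; exact Measure.restrict_le_self)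
  calc ‖∫ x in s, f x ∂μ‖
      ≤ (eLpNorm f 1 (μ.restrict s)).toReal := by
        rw [eLpNorm_one_eq_lintegral_enorm,
          ← integral_norm_eq_lintegral_enorm hf.aestronglyMeasurable.restrict]
        exact norm_integral_le_integral_norm _
    _ ≤ (eLpNorm f p μ * μ s ^ (1 - 1 / p.toReal)).toReal :=
        ENNReal.toReal_mono (ENNReal.mul_ne_top hf.eLpNorm_ne_top
          (ENNReal.rpow_ne_top_of_nonneg hexp hs)) holder
    _ = (eLpNorm f p μ).toReal * μ.real s ^ (1 - 1 / p.toReal) := by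
        rw [ENNReal.toReal_mul, ← ENNReal.toReal_rpow, Measure.real]

theorem norm_setAverage_le_eLpNorm_mul_rpow {p : ℝ≥0∞} (hp : 1 ≤ p) (hf : MemLp f p μ)
    (hs : μ s ≠ 0) (hs' : μ s ≠ ∞) :
    ‖⨍ x in s, f x ∂μ‖ ≤ (eLpNorm f p μ).toReal * μ.real s ^ (-(1 / p.toReal)) := by
  have hs_pos : 0 < μ.real s := ENNReal.toReal_pos hs hs'
  have hpow : μ.real s ^ (1 - 1 / p.toReal) = μ.real s * μ.real s ^ (-(1 / p.toReal)) := by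
    rw [sub_eq_add_neg, Real.rpow_add hs_pos, Real.rpow_one]
  rw [setAverage_eq, norm_smul, norm_inv, Real.norm_of_nonneg hs_pos.le, inv_mul_le_iff₀ hs_pos,
    mul_left_comm, ← hpow]
  exact norm_setIntegral_le_eLpNorm_mul_rpow hp hf hs'

end Average

section ParabolicCube

variable {n : ℕ} {z₀ z : PSpace n} {r R : ℝ}

theorem ciSup_lt_iff_of_pos {ι : Type*} [Finite ι] {f : ι → ℝ} (hr : 0 < r) :
    ⨆ i, f i < r ↔ ∀ i, f i < r := by
  rcases isEmpty_or_nonempty ι with _ | _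
  · simpa using hr
  · refine ⟨fun h i => (le_ciSup (Set.finite_range f).bddAbove i).trans_lt h, fun h => ?_⟩
    obtain ⟨i, hi⟩ := exists_eq_ciSup_of_finite (f := f)
    exact hi ▸ h i

/-- The half side lengths `(r, …, r, r²)` of a parabolic cube of radius `r`, the time coordinate
being the last one. -/
def pHalfWidth (n : ℕ) (r : ℝ) : Fin (n + 1) → ℝ :=
  Fin.snoc (fun _ => r) (r ^ 2)

theorem mem_pCube (hr : 0 < r) :
    z ∈ pCube z₀ r ↔ ∀ i, |z i - z₀ i| < pHalfWidth n r i := by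
  simp only [pCube, pnorm, Set.mem_ofPred_eq, max_lt_iff, ciSup_lt_iff_of_pos hr, Real.sqrt_lt' hr,
    Fin.forall_fin_succ', pHalfWidth, Fin.snoc_castSucc, Fin.snoc_last, PiLp.sub_apply]

theorem pCube_subset_pCube (hrR : r ≤ R) : pCube z₀ r ⊆ pCube z₀ R :=
  fun _ hz => lt_of_lt_of_le hz hrR

theorem volume_pCube (hr : 0 < r) :
    volume (pCube z₀ r) = ENNReal.ofReal (2 ^ (n + 1) * r ^ (n + 2)) := by
  have hbox : pCube z₀ r = (MeasurableEquiv.toLp 2 (Fin (n + 1) → ℝ)).symm ⁻¹'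
      Set.univ.pi fun i => Metric.ball (z₀ i) (pHalfWidth n r i) := by
    ext z
    simp [mem_pCube hr, Real.dist_eq]
  rw [hbox, (EuclideanSpace.volume_preserving_symm_measurableEquiv_toLp
    (Fin (n + 1))).measure_preimage_equiv, volume_pi_pi]
  simp only [Real.volume_ball, Fin.prod_univ_castSucc, pHalfWidth, Fin.snoc_castSucc,
    Fin.snoc_last, Finset.prod_const, Finset.card_univ, Fintype.card_fin]
  rw [← ENNReal.ofReal_pow (by positivity), ← ENNReal.ofReal_mul (by positivity)]
  congr 1
  ring

theorem volume_pCube_ne_zero (hr : 0 < r) : volume (pCube z₀ r) ≠ 0 := by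
  rw [volume_pCube hr, ne_eq, ENNReal.ofReal_eq_zero, not_le]
  positivity

theorem volume_pCube_ne_top (hr : 0 < r) : volume (pCube z₀ r) ≠ ∞ := by
  rw [volume_pCube hr]
  exact ENNReal.ofReal_ne_top

theorem volume_real_pCube (hr : 0 < r) :
    volume.real (pCube z₀ r) = 2 ^ (n + 1) * r ^ (n + 2) := by
  rw [Measure.real, volume_pCube hr, ENNReal.toReal_ofReal (by positivity)]

theorem sq_le_volume_real_pCube (hr : 1 ≤ r) : r ^ 2 ≤ volume.real (pCube z₀ r) := by
  rw [volume_real_pCube (zero_lt_one.trans_le hr)]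
  calc r ^ 2 = 1 * r ^ 2 := (one_mul _).symm
    _ ≤ 2 ^ (n + 1) * r ^ (n + 2) := by
      gcongr
      · exact one_le_pow₀ one_le_two
      · lia

end ParabolicCube

section BMO

variable {n : ℕ} {O : Set (PSpace n)} {u : PSpace n → ℝ} {z₀ : PSpace n} {r R : ℝ}

theorem pBMO_nonneg : 0 ≤ pBMO O u := by
  refine Real.sSup_nonneg ?_
  rintro _ ⟨z₀, r, -, -, rfl⟩
  rw [setAverage_eq]
  positivity

theorem bddAbove_oscSet_of_abs_le {M : ℝ} (hM : ∀ z, |u z| ≤ M) : BddAbove (oscSet O u) := by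
  have hM0 : 0 ≤ M := (abs_nonneg _).trans (hM 0)
  have hmean (z₀ : PSpace n) (r : ℝ) : |⨍ w in pCube z₀ r, u w| ≤ M :=
    norm_average_le_of_ae_norm_le (f := u) hM0 (.of_forall hM)
  refine ⟨M + M, ?_⟩
  rintro _ ⟨z₀, r, -, -, rfl⟩
  have hdev (z : PSpace n) : ‖|u z - ⨍ w in pCube z₀ r, u w|‖ ≤ M + M := by
    rw [Real.norm_eq_abs, abs_abs]
    exact (abs_sub _ _).trans (add_le_add (hM z) (hmean z₀ r))
  exact (Real.le_norm_self _).trans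
    (norm_average_le_of_ae_norm_le (by positivity) (.of_forall hdev))

theorem bddAbove_oscSet_schwartzMap (u : SchwartzMap (PSpace n) ℝ) : BddAbove (oscSet O u) :=
  bddAbove_oscSet_of_abs_le (SchwartzMap.norm_le_seminorm ℝ u)

theorem abs_setAverage_pCube_sub_le (hr : 0 < r) (hrR : r ≤ R) (hO : pCube z₀ R ⊆ O)
    (hu : IntegrableOn u (pCube z₀ R)) (hosc : BddAbove (oscSet O u)) :
    |(⨍ z in pCube z₀ r, u z) - ⨍ z in pCube z₀ R, u z| ≤ (R / r) ^ (n + 2) * pBMO O u := by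
  have hR : 0 < R := hr.trans_le hrR
  have hratio : volume.real (pCube z₀ R) / volume.real (pCube z₀ r) = (R / r) ^ (n + 2) := by
    rw [volume_real_pCube hR, volume_real_pCube hr, mul_div_mul_left _ _ (by positivity), div_pow]
  calc |(⨍ z in pCube z₀ r, u z) - ⨍ z in pCube z₀ R, u z|
      ≤ (R / r) ^ (n + 2) * ⨍ z in pCube z₀ R, |u z - ⨍ w in pCube z₀ R, u w| := by
        rw [← hratio]
        exact norm_setAverage_sub_le (pCube_subset_pCube hrR) (volume_pCube_ne_zero hr)
          (volume_pCube_ne_top hR) hu _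
    _ ≤ (R / r) ^ (n + 2) * pBMO O u := by
        gcongr
        exact le_csSup hosc ⟨z₀, R, hR, hO, rfl⟩

theorem abs_setAverage_pCube_sub_two_pow_mul_le (hr : 0 < r) (k : ℕ)
    (hO : pCube z₀ (2 ^ k * r) ⊆ O) (hu : IntegrableOn u (pCube z₀ (2 ^ k * r)))
    (hosc : BddAbove (oscSet O u)) :
    |(⨍ z in pCube z₀ r, u z) - ⨍ z in pCube z₀ (2 ^ k * r), u z| ≤
      k * (2 ^ (n + 2) * pBMO O u) := by
  have hdouble {i : ℕ} (hi : i < k) :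
      dist (⨍ z in pCube z₀ (2 ^ i * r), u z) (⨍ z in pCube z₀ (2 ^ (i + 1) * r), u z) ≤
        2 ^ (n + 2) * pBMO O u := by
    have hratio : 2 ^ (i + 1) * r / (2 ^ i * r) = 2 := by field_simp; ring
    have hsub : pCube z₀ (2 ^ (i + 1) * r) ⊆ pCube z₀ (2 ^ k * r) :=
      pCube_subset_pCube (by gcongr; exacts [one_le_two, hi])
    have hstep := abs_setAverage_pCube_sub_le (r := 2 ^ i * r) (R := 2 ^ (i + 1) * r)
      (by positivity) (by gcongr; exacts [one_le_two, i.le_succ]) (hsub.trans hO)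
      (hu.mono_set hsub) hosc
    rwa [hratio] at hstep
  simpa [Real.dist_eq] using dist_le_range_sum_of_dist_le k hdouble

end BMO

section Norms

variable {n : ℕ} {O : Set (PSpace n)} {u : PSpace n → ℝ} {z₀ : PSpace n} {r : ℝ}

theorem L2norm_nonneg_s12 : 0 ≤ L2norm O u := ENNReal.toReal_nonneg

theorem L2norm_le_sobNorm (m : ℕ) : L2norm O u ≤ sobNorm m O u := by
  let term (p : ℕ × ℕ) : ℝ :=
    ∑ α ∈ Finset.Nat.antidiagonalTuple n p.2, L2norm O (mixDeriv p.1 α u)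
  calc L2norm O u = term (0, 0) := by
        simp [term, Finset.Nat.antidiagonalTuple_zero_right, mixDeriv, DxPow]
    _ ≤ sobNorm m O u :=
        Finset.single_le_sum (f := term) (fun _ _ => Finset.sum_nonneg fun _ _ => L2norm_nonneg_s12)
          (by simp)

theorem abs_setAverage_pCube_le_L2norm_div (hu : MemLp u 2) (hr : 1 ≤ r) :
    |⨍ z in pCube z₀ r, u z| ≤ L2norm Set.univ u / r := by
  have hr0 : 0 < r := zero_lt_one.trans_le hr
  have hsqrt : r ≤ √(volume.real (pCube z₀ r)) := Real.le_sqrt_of_sq_le (sq_le_volume_real_pCube hr)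
  calc |⨍ z in pCube z₀ r, u z|
      ≤ L2norm Set.univ u / √(volume.real (pCube z₀ r)) := by
        simpa [L2norm, Real.sqrt_eq_rpow, Real.rpow_neg measureReal_nonneg, div_eq_mul_inv] using
          norm_setAverage_le_eLpNorm_mul_rpow one_le_two hu (volume_pCube_ne_zero hr0)
            (volume_pCube_ne_top hr0)
    _ ≤ L2norm Set.univ u / r := div_le_div_of_nonneg_left L2norm_nonneg_s12 hr0 hsqrt

theorem logPlus_eq_posLog : logPlus = posLog :=
  funext fun _ => max_comm _ _

theorem logPlus_L2norm_le_logPlus_sobNorm (m : ℕ) :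
    logPlus (L2norm O u) ≤ logPlus (sobNorm m O u) := by
  simpa only [logPlus_eq_posLog] using posLog_le_posLog L2norm_nonneg_s12 (L2norm_le_sobNorm m)

theorem exists_nat_le_two_pow_and_le_posLog (x : ℝ) :
    ∃ k : ℕ, x ≤ 2 ^ k ∧ (k : ℝ) ≤ 2 * log⁺ x + 1 := by
  have hlog : 0 ≤ log⁺ x := posLog_nonneg
  have hlog_two : 1 ≤ 2 * Real.log 2 := by linarith [Real.log_two_gt_d9]
  refine ⟨⌈2 * log⁺ x⌉₊, ?_, (Nat.ceil_lt_add_one (by positivity)).le⟩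
  rcases le_or_gt x 0 with hx | hx
  · exact hx.trans (by positivity)
  rw [← Real.log_le_log_iff hx (by positivity), Real.log_pow]
  calc Real.log x ≤ log⁺ x := le_max_right _ _
    _ ≤ log⁺ x * (2 * Real.log 2) := le_mul_of_one_le_right hlog hlog_two
    _ = 2 * log⁺ x * Real.log 2 := by ring
    _ ≤ ⌈2 * log⁺ x⌉₊ * Real.log 2 := by gcongr; exact Nat.le_ceil _

end Norms

theorem mean_on_unit_cube_bound_general {n : ℕ} {u : PSpace n → ℝ} (hu : MemLp u 2)
    (hosc : BddAbove (oscSet Set.univ u)) (z₀ : PSpace n) {r : ℝ} (hr : 1 ≤ r) :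
    |⨍ z in pCube z₀ r, u z| ≤
      1 + 2 ^ (n + 3) * (pBMO Set.univ u * (1 + logPlus (L2norm Set.univ u))) := by
  rw [logPlus_eq_posLog]
  set N := L2norm Set.univ u
  have hB : 0 ≤ pBMO Set.univ u := pBMO_nonneg
  obtain ⟨k, hN, hk⟩ := exists_nat_le_two_pow_and_le_posLog N
  have hR : 1 ≤ 2 ^ k * r := one_le_mul_of_one_le_of_one_le (one_le_pow₀ one_le_two) hr
  have hNR : N ≤ 2 ^ k * r := hN.trans (le_mul_of_one_le_right (by positivity) hr)
  have hint : IntegrableOn u (pCube z₀ (2 ^ k * r)) :=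
    have := isFiniteMeasure_restrict.2 (volume_pCube_ne_top (z₀ := z₀) (zero_lt_one.trans_le hR))
    (hu.restrict _).integrable one_le_two
  have hlarge : |⨍ z in pCube z₀ (2 ^ k * r), u z| ≤ 1 :=
    (abs_setAverage_pCube_le_L2norm_div hu hR).trans
      (div_le_one_of_le₀ hNR (zero_le_one.trans hR))
  have hdoubling := abs_setAverage_pCube_sub_two_pow_mul_le (zero_lt_one.trans_le hr) k
    (Set.subset_univ (pCube z₀ (2 ^ k * r))) hint hosc
  calc |⨍ z in pCube z₀ r, u z|
      ≤ |⨍ z in pCube z₀ (2 ^ k * r), u z| +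
          |(⨍ z in pCube z₀ r, u z) - ⨍ z in pCube z₀ (2 ^ k * r), u z| :=
        sub_le_iff_le_add'.1 (abs_sub_abs_le_abs_sub _ _)
    _ ≤ 1 + k * (2 ^ (n + 2) * pBMO Set.univ u) := add_le_add hlarge hdoubling
    _ ≤ 1 + (2 * (1 + log⁺ N)) * (2 ^ (n + 2) * pBMO Set.univ u) := by gcongr; linarith
    _ = 1 + 2 ^ (n + 3) * (pBMO Set.univ u * (1 + log⁺ N)) := by ring

/-- Estimate (2.26) of the mean of `u` over parabolic cubes of radius `2`:
`|u_Q| ≤ C (1 + ‖u‖_{BMOₚ} (1 + log⁺ ‖u‖_{W₂^{2m,m}}))`. -/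
theorem mean_on_unit_cube_bound (n m : ℕ) (hn : 1 ≤ n) (hm : 0 < m)
    (hmn : ((n : ℝ) + 2) / 4 < m) :
    ∃ C : ℝ, 0 < C ∧ ∀ u : SchwartzMap (PSpace n) ℝ, ∀ z₀ : PSpace n,
      |⨍ z in pCube z₀ 2, u z| ≤
        C * (1 + pBMO Set.univ ⇑u * (1 + logPlus (sobNorm m Set.univ ⇑u))) := by
  refine ⟨2 ^ (n + 3), by positivity, fun u z₀ => ?_⟩
  have hu := mean_on_unit_cube_bound_general (u.memLp 2) (bddAbove_oscSet_schwartzMap u) z₀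
    one_le_two
  refine hu.trans ?_
  rw [mul_one_add (2 ^ (n + 3) : ℝ)]
  gcongr
  exacts [one_le_pow₀ one_le_two, pBMO_nonneg, logPlus_L2norm_le_logPlus_sobNorm m]

end
end

section
/- Let T > 0, let Ω_T = (0,1) × (0,T) and Ω̂_T = (−1,2) × (0,T), let u be continuous on [0,1] × [0,T] with finite parabolic BMO norm on Ω_T, and let ũ be the reflection extension of u. Set r₀ = min(1/2, (T/2)^{1/2}) and r₁ = r₀/2. Then there exists a universal constant C > 0 (independent of T and u) such that for every parabolic cube Q_r ⊆ Ω̂_T of radius r ≤ r₁, inf_{c ∈ ℝ} (1/|Q_r|) ∫_{Q_r} |ũ − c| ≤ C ‖u‖_{BMOₚ(Ω_T)}. -/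
open MeasureTheory Real
open scoped ENNReal

noncomputable section

/-- The parabolic distance `‖z‖ₚ = max |x| √|t|` from `z = (x,t) ∈ ℝ²` to the origin. -/
def pnorm2 (z : ℝ × ℝ) : ℝ := max |z.1| (Real.sqrt |z.2|)

/-- The parabolic cube of radius `r` centered at `z₀` in `ℝ²`. -/
def pCube2 (z₀ : ℝ × ℝ) (r : ℝ) : Set (ℝ × ℝ) := {z | pnorm2 (z - z₀) < r}

/-- The set of mean oscillations `⨍_Q |u - u_Q|` of `u` over parabolic cubes `Q ⊆ O`. -/
def oscSet2 (O : Set (ℝ × ℝ)) (u : ℝ × ℝ → ℝ) : Set ℝ :=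
  {v | ∃ z₀ r, 0 < r ∧ pCube2 z₀ r ⊆ O ∧
    v = ⨍ z in pCube2 z₀ r, |u z - ⨍ w in pCube2 z₀ r, u w|}

/-- The parabolic BMO norm of `u` over `O ⊆ ℝ²`. -/
def pBMO2 (O : Set (ℝ × ℝ)) (u : ℝ × ℝ → ℝ) : ℝ := sSup (oscSet2 O u)

/-- The domain `Ω_T = (0,1) × (0,T)`. -/
def Omega (T : ℝ) : Set (ℝ × ℝ) := Set.Ioo (0 : ℝ) 1 ×ˢ Set.Ioo (0 : ℝ) T

/-- The domain `Ω̂_T = (-1,2) × (0,T)`. -/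
def OmegaHat (T : ℝ) : Set (ℝ × ℝ) := Set.Ioo (-1 : ℝ) 2 ×ˢ Set.Ioo (0 : ℝ) T

/-- The domain `Ω̃_T = (-1,2) × (-T,2T)`. -/
def OmegaTilde (T : ℝ) : Set (ℝ × ℝ) := Set.Ioo (-1 : ℝ) 2 ×ˢ Set.Ioo (-T) (2 * T)

/-- The spatial reflection extension of `u` from `[0,1]` to `(-1,2)` (in the `x` variable). -/
def extSpace (u : ℝ × ℝ → ℝ) : ℝ × ℝ → ℝ := fun p =>
  if p.1 < 0 then -3 * u (-p.1, p.2) + 4 * u (-p.1 / 2, p.2)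
  else if 1 < p.1 then -3 * u (2 - p.1, p.2) + 4 * u ((3 - p.1) / 2, p.2)
  else u p

/-- The temporal reflection extension from `[0,T]` to `(-T,2T)` (in the `t` variable). -/
def extTime (T : ℝ) (v : ℝ × ℝ → ℝ) : ℝ × ℝ → ℝ := fun p =>
  if p.2 < 0 then v (p.1, -p.2)
  else if T < p.2 then v (p.1, 2 * T - p.2)
  else v p

/-- The reflection extension `ũ` of `u` from `Ω_T` to `Ω̃_T = (-1,2) × (-T,2T)`. -/
def uext (T : ℝ) (u : ℝ × ℝ → ℝ) : ℝ × ℝ → ℝ := extTime T (extSpace u)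

/-- The reflection extension `ũ`, extended by `0` outside `Ω̃_T`. -/
def uextZ (T : ℝ) (u : ℝ × ℝ → ℝ) : ℝ × ℝ → ℝ :=
  (OmegaTilde T).indicator (uext T u)

/-- The partial derivative `u_x`. -/
def Dx2 (u : ℝ × ℝ → ℝ) : ℝ × ℝ → ℝ := fun p => fderiv ℝ u p (1, 0)

/-- The partial derivative `u_t`. -/
def Dt2 (u : ℝ × ℝ → ℝ) : ℝ × ℝ → ℝ := fun p => fderiv ℝ u p (0, 1)

/-- The `L²(O)` norm. -/
def L2norm2 (O : Set (ℝ × ℝ)) (v : ℝ × ℝ → ℝ) : ℝ :=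
  (eLpNorm v 2 (volume.restrict O)).toReal

/-- The parabolic Sobolev norm
`‖u‖_{W₂^{2,1}(O)} = ‖u‖_{L²} + ‖u_x‖_{L²} + ‖u_{xx}‖_{L²} + ‖u_t‖_{L²}`. -/
def W21norm (O : Set (ℝ × ℝ)) (u : ℝ × ℝ → ℝ) : ℝ :=
  L2norm2 O u + L2norm2 O (Dx2 u) + L2norm2 O (Dx2 (Dx2 u)) + L2norm2 O (Dt2 u)

/-!
In time nothing is reflected on `OmegaHat T`, and the symmetry `x ↦ 1 - x` reduces everything to
the end `x = 0`. The weights of the two reflections have sum `-3 + 4 = 1`, so the extension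
reproduces constants. If a cube of radius `r` meets the line `x = 0`, then its inner part and both
reflections of its outer part lie in a single cube of radius `r` in `Omega T`, whose mean is used
for all three; dilation by `1 / 2` doubles areas under pullback, which gives the factor
`3 + 4 * 2 + 1 = 12`. If the cube lies beyond the line, then its two reflections lie in two cubes of
radius `r` in `Omega T` with means `c₁`, `c₂`, and `-3 * c₁ + 4 * c₂` is the right constant.
-/

section Deviation

variable {α E : Type*} [MeasurableSpace α] [NormedAddCommGroup E]

/-- The `L¹(s)` distance from `f` to the constant `c` is finite and at most `M`. -/
def DeviationLE (μ : Measure α) (s : Set α) (f : α → E) (c : E) (M : ℝ) : Prop :=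
  IntegrableOn (fun p => f p - c) s μ ∧ ∫ p in s, ‖f p - c‖ ∂μ ≤ M

namespace DeviationLE

variable {μ : Measure α} {s t : Set α} {f g : α → E} {c d : E} {M N : ℝ}

lemma mono (h : DeviationLE μ s f c M) (hMN : M ≤ N) : DeviationLE μ s f c N :=
  ⟨h.1, h.2.trans hMN⟩

lemma nonneg (h : DeviationLE μ s f c M) : 0 ≤ M :=
  (integral_nonneg fun _ => norm_nonneg _).trans h.2

lemma mono_set (h : DeviationLE μ t f c M) (hst : s ≤ᵐ[μ] t) : DeviationLE μ s f c M :=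
  ⟨h.1.mono_set_ae hst,
    (setIntegral_mono_set h.1.norm (.of_forall fun _ => norm_nonneg _) hst).trans h.2⟩

lemma congr (h : DeviationLE μ s f c M) (hs : MeasurableSet s) (hfg : Set.EqOn g f s) :
    DeviationLE μ s g c M := by
  have hsub : Set.EqOn (fun p => g p - c) (fun p => f p - c) s := fun p hp => by
    simp only [hfg hp]
  refine ⟨(integrableOn_congr_fun hsub hs).2 h.1, ?_⟩
  rw [setIntegral_congr_fun hs fun p hp => congrArg norm (hsub hp)]
  exact h.2

lemma union (hs : DeviationLE μ s f c M) (ht : DeviationLE μ t f c N) :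
    DeviationLE μ (s ∪ t) f c (M + N) := by
  refine ⟨hs.1.union ht.1, ?_⟩
  calc ∫ p in s ∪ t, ‖f p - c‖ ∂μ
      ≤ ∫ p, ‖f p - c‖ ∂(μ.restrict s + μ.restrict t) :=
        integral_mono_measure (Measure.restrict_union_le s t)
          (.of_forall fun _ => norm_nonneg _) (hs.1.norm.add_measure ht.1.norm)
    _ = ∫ p in s, ‖f p - c‖ ∂μ + ∫ p in t, ‖f p - c‖ ∂μ :=
        integral_add_measure hs.1.norm ht.1.norm
    _ ≤ M + N := add_le_add hs.2 ht.2

lemma add (hf : DeviationLE μ s f c M) (hg : DeviationLE μ s g d N) :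
    DeviationLE μ s (fun p => f p + g p) (c + d) (M + N) := by
  have hsub (p : α) : f p + g p - (c + d) = (f p - c) + (g p - d) := add_sub_add_comm ..
  simp only [DeviationLE, hsub]
  refine ⟨hf.1.add hg.1, ?_⟩
  calc ∫ p in s, ‖(f p - c) + (g p - d)‖ ∂μ
      ≤ ∫ p in s, (‖f p - c‖ + ‖g p - d‖) ∂μ :=
        integral_mono (hf.1.add hg.1).norm (hf.1.norm.add hg.1.norm) fun _ => norm_add_le _ _
    _ = ∫ p in s, ‖f p - c‖ ∂μ + ∫ p in s, ‖g p - d‖ ∂μ := integral_add hf.1.norm hg.1.norm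
    _ ≤ M + N := add_le_add hf.2 hg.2

lemma const_smul {𝕜 : Type*} [NormedField 𝕜] [NormedSpace 𝕜 E] (a : 𝕜)
    (h : DeviationLE μ s f c M) : DeviationLE μ s (fun p => a • f p) (a • c) (‖a‖ * M) := by
  simp only [DeviationLE, ← smul_sub, norm_smul, integral_const_mul]
  exact ⟨h.1.smul a, mul_le_mul_of_nonneg_left h.2 (norm_nonneg a)⟩

lemma comp {β : Type*} [MeasurableSpace β] {ν : Measure β} {s : Set β} {φ : β → α} {k : ENNReal}
    (h : DeviationLE μ t f c M) (hφ : MeasurableEmbedding φ) (hk : k ≠ ⊤)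
    (hmap : ν.map φ = k • μ) (hst : Set.MapsTo φ s t) :
    DeviationLE ν s (f ∘ φ) c (k.toReal * M) := by
  have hint : IntegrableOn (fun p => f p - c) t (ν.map φ) := by
    rw [hmap, IntegrableOn, Measure.restrict_smul]
    exact h.1.smul_measure hk
  refine mono_set (t := φ ⁻¹' t) ⟨hφ.integrableOn_map_iff.1 hint, ?_⟩
    hst.subset_preimage.eventuallyLE
  calc ∫ p in φ ⁻¹' t, ‖f (φ p) - c‖ ∂ν
      = ∫ p in t, ‖f p - c‖ ∂(ν.map φ) := (hφ.setIntegral_map (fun p => ‖f p - c‖) t).symm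
    _ = k.toReal * ∫ p in t, ‖f p - c‖ ∂μ := by
        rw [hmap, Measure.restrict_smul, integral_smul_measure, smul_eq_mul]
    _ ≤ k.toReal * M := mul_le_mul_of_nonneg_left h.2 ENNReal.toReal_nonneg

lemma iInf_setAverage_le (h : DeviationLE μ s f c (μ.real s * M)) (hs : 0 < μ.real s) :
    ⨅ c : E, ⨍ p in s, ‖f p - c‖ ∂μ ≤ M := by
  have hbdd : BddBelow (Set.range fun c : E => ⨍ p in s, ‖f p - c‖ ∂μ) :=
    ⟨0, Set.forall_mem_range.2 fun c => integral_nonneg fun _ => norm_nonneg _⟩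
  refine (ciInf_le hbdd c).trans ?_
  rw [setAverage_eq, smul_eq_mul, inv_mul_le_iff₀ hs]
  exact h.2

end DeviationLE

end Deviation

section ParabolicCubes

variable {z p : ℝ × ℝ} {r : ℝ}

lemma mem_pCube2 (hr : 0 < r) :
    p ∈ pCube2 z r ↔
      p.1 ∈ Set.Ioo (z.1 - r) (z.1 + r) ∧ p.2 ∈ Set.Ioo (z.2 - r ^ 2) (z.2 + r ^ 2) := by
  simp only [pCube2, pnorm2, Set.mem_ofPred_eq, max_lt_iff, Prod.fst_sub, Prod.snd_sub,
    Real.sqrt_lt' hr, ← Real.ball_eq_Ioo, Metric.mem_ball, Real.dist_eq]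

lemma pCube2_eq_Ioo_prod_Ioo (hr : 0 < r) :
    pCube2 z r = Set.Ioo (z.1 - r) (z.1 + r) ×ˢ Set.Ioo (z.2 - r ^ 2) (z.2 + r ^ 2) :=
  Set.ext fun _ => mem_pCube2 hr

lemma measurableSet_pCube2 (hr : 0 < r) : MeasurableSet (pCube2 z r) := by
  rw [pCube2_eq_Ioo_prod_Ioo hr]
  exact measurableSet_Ioo.prod measurableSet_Ioo

lemma volume_real_pCube2 (hr : 0 < r) : volume.real (pCube2 z r) = 4 * r ^ 3 := by
  rw [pCube2_eq_Ioo_prod_Ioo hr, Measure.volume_eq_prod, measureReal_prod_prod,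
    Real.volume_real_Ioo_of_le (by linarith), Real.volume_real_Ioo_of_le (by nlinarith)]
  ring

lemma volume_real_pCube2_pos (hr : 0 < r) : 0 < volume.real (pCube2 z r) := by
  rw [volume_real_pCube2 hr]
  positivity

lemma pCube2_subset_Ioo_prod_Ioo_iff (hr : 0 < r) {a b c d : ℝ} :
    pCube2 z r ⊆ Set.Ioo a b ×ˢ Set.Ioo c d ↔
      (a ≤ z.1 - r ∧ z.1 + r ≤ b) ∧ c ≤ z.2 - r ^ 2 ∧ z.2 + r ^ 2 ≤ d := by
  have hx : z.1 - r < z.1 + r := by linarith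
  have ht : z.2 - r ^ 2 < z.2 + r ^ 2 := by nlinarith
  rw [pCube2_eq_Ioo_prod_Ioo hr, Set.prod_subset_prod_iff' <|
    (Set.nonempty_Ioo.2 hx).prod (Set.nonempty_Ioo.2 ht), Set.Ioo_subset_Ioo_iff hx,
    Set.Ioo_subset_Ioo_iff ht]

end ParabolicCubes

section BMO

variable {O : Set (ℝ × ℝ)} {u : ℝ × ℝ → ℝ} {z : ℝ × ℝ} {r : ℝ}

lemma deviationLE_setAverage_pCube2 (hu : IntegrableOn u O) (hb : BddAbove (oscSet2 O u))
    (hr : 0 < r) (hz : pCube2 z r ⊆ O) :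
    DeviationLE volume (pCube2 z r) u (⨍ p in pCube2 z r, u p)
      (4 * r ^ 3 * pBMO2 O u) := by
  have hV : 0 < volume.real (pCube2 z r) := volume_real_pCube2_pos hr
  have hfin : volume (pCube2 z r) ≠ ⊤ := (ENNReal.toReal_pos_iff.1 hV).2.ne
  refine ⟨(hu.mono_set hz).sub (integrableOn_const hfin), ?_⟩
  rw [← volume_real_pCube2 hr, ← inv_mul_le_iff₀ hV, ← smul_eq_mul, ← setAverage_eq]
  exact le_csSup hb ⟨z, r, hr, hz, rfl⟩

end BMO

section Reflection

variable {u : ℝ × ℝ → ℝ} {p : ℝ × ℝ} {e l : ℝ}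

/-- The reflection of `ℝ × ℝ` across the line `x = e`, followed by the dilation of ratio `l` in `x`
that fixes this line. -/
def dilatedReflection (e l : ℝ) (p : ℝ × ℝ) : ℝ × ℝ := (e - l * (p.1 - e), p.2)

lemma measurableEmbedding_dilatedReflection (hl : l ≠ 0) :
    MeasurableEmbedding (dilatedReflection e l) := by
  refine Measurable.measurableEmbedding (by unfold dilatedReflection; fun_prop) fun p q hpq => ?_
  simp only [dilatedReflection, Prod.mk.injEq, sub_right_inj, mul_right_inj' hl,
    sub_left_inj] at hpq
  exact Prod.ext hpq.1 hpq.2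

lemma map_volume_dilatedReflection (hl : l ≠ 0) :
    (volume : Measure (ℝ × ℝ)).map (dilatedReflection e l) = ENNReal.ofReal |l⁻¹| • volume := by
  have hfst : (volume : Measure ℝ).map (fun x => e - l * (x - e))
      = ENNReal.ofReal |l⁻¹| • volume := by
    have hcomp :
        (fun x : ℝ => e - l * (x - e)) = (fun x => e - x) ∘ (l * ·) ∘ (fun x => x - e) := rfl
    rw [hcomp, ← Measure.map_map (by fun_prop) (by fun_prop),
      ← Measure.map_map (by fun_prop) (by fun_prop), map_sub_right_eq_self,
      Real.map_volume_mul_left hl, Measure.map_smul, Measure.map_sub_left_eq_self]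
  have hprod := Measure.map_prod_map (volume : Measure ℝ) (volume : Measure ℝ)
    (f := fun x => e - l * (x - e)) (g := id) (by fun_prop) measurable_id
  rw [hfst, Measure.map_id, Measure.prod_smul_left] at hprod
  exact hprod.symm

lemma DeviationLE.comp_dilatedReflection {E : Type*} [NormedAddCommGroup E] {f : ℝ × ℝ → E} {c : E}
    {M : ℝ} {s t : Set (ℝ × ℝ)} (h : DeviationLE volume t f c M) (hl : l ≠ 0)
    (hst : Set.MapsTo (dilatedReflection e l) s t) :
    DeviationLE volume s (f ∘ dilatedReflection e l) c (|l⁻¹| * M) := by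
  have := h.comp (measurableEmbedding_dilatedReflection hl) ENNReal.ofReal_ne_top
    (map_volume_dilatedReflection hl) hst
  rwa [ENNReal.toReal_ofReal (abs_nonneg _)] at this

lemma dilatedReflection_mem_pCube2 {z : ℝ × ℝ} {y r : ℝ} (hr : 0 < r) (hp : p ∈ pCube2 z r)
    (hy : e - l * (p.1 - e) ∈ Set.Ioo (y - r) (y + r)) :
    dilatedReflection e l p ∈ pCube2 (y, z.2) r :=
  (mem_pCube2 hr).2 ⟨hy, ((mem_pCube2 hr).1 hp).2⟩

/-- The extension of `u` across the line `x = e` by a combination of two dilated reflections, with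
weights `-3` and `4` of total mass `1`. -/
def reflectedExtension (e : ℝ) (u : ℝ × ℝ → ℝ) (p : ℝ × ℝ) : ℝ :=
  -3 * u (dilatedReflection e 1 p) + 4 * u (dilatedReflection e (1 / 2) p)

lemma extSpace_of_fst_neg (hp : p.1 < 0) : extSpace u p = reflectedExtension 0 u p := by
  simp only [extSpace, if_pos hp, reflectedExtension, dilatedReflection]
  ring_nf

lemma extSpace_of_fst_mem_Icc (hp : p.1 ∈ Set.Icc 0 1) : extSpace u p = u p := by
  simp only [extSpace, if_neg hp.1.not_gt, if_neg hp.2.not_gt]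

lemma uext_eq_extSpace {T : ℝ} (hp : p.2 ∈ Set.Icc 0 T) : uext T u p = extSpace u p := by
  simp only [uext, extTime, if_neg hp.1.not_gt, if_neg hp.2.not_gt]

lemma deviationLE_reflectedExtension {s t₁ t₂ : Set (ℝ × ℝ)} {c₁ c₂ M : ℝ}
    (h₁ : DeviationLE volume t₁ u c₁ M) (h₂ : DeviationLE volume t₂ u c₂ M)
    (hst₁ : Set.MapsTo (dilatedReflection e 1) s t₁)
    (hst₂ : Set.MapsTo (dilatedReflection e (1 / 2)) s t₂) :
    DeviationLE volume s (reflectedExtension e u) (-3 * c₁ + 4 * c₂) (11 * M) := by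
  have h := ((h₁.comp_dilatedReflection one_ne_zero hst₁).const_smul (-3 : ℝ)).add
    ((h₂.comp_dilatedReflection (by norm_num) hst₂).const_smul (4 : ℝ))
  refine h.mono (le_of_eq ?_)
  norm_num
  ring

lemma DeviationLE.union_of_eqOn_reflectedExtension {v : ℝ × ℝ → ℝ} {s₁ s₂ t : Set (ℝ × ℝ)} {c M : ℝ}
    (h : DeviationLE volume t u c M) (hs₁ : MeasurableSet s₁) (hs₂ : MeasurableSet s₂)
    (hv₁ : Set.EqOn v (reflectedExtension e u) s₁) (hv₂ : Set.EqOn v u s₂)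
    (hst₁ : Set.MapsTo (dilatedReflection e 1) s₁ t)
    (hst₁' : Set.MapsTo (dilatedReflection e (1 / 2)) s₁ t) (hst₂ : s₂ ⊆ t) :
    DeviationLE volume (s₁ ∪ s₂) v c (12 * M) := by
  have hreflected : DeviationLE volume s₁ v c (11 * M) := by
    convert (deviationLE_reflectedExtension h h hst₁ hst₁').congr hs₁ hv₁ using 1
    ring
  have hinside : DeviationLE volume s₂ v c M := (h.mono_set hst₂.eventuallyLE).congr hs₂ hv₂
  refine (hreflected.union hinside).mono (le_of_eq ?_)
  ring

end Reflection

section Mirror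

variable {z : ℝ × ℝ} {r : ℝ}

/-- The reflection across the line `x = 1 / 2`, which exchanges the two ends of `Omega T`. -/
def mirror (p : ℝ × ℝ) : ℝ × ℝ := dilatedReflection (1 / 2) 1 p

lemma mirror_apply (p : ℝ × ℝ) : mirror p = (1 - p.1, p.2) := by
  unfold mirror dilatedReflection
  ring_nf

lemma DeviationLE.comp_mirror {E : Type*} [NormedAddCommGroup E] {f : ℝ × ℝ → E} {c : E} {M : ℝ}
    {s t : Set (ℝ × ℝ)} (h : DeviationLE volume t f c M) (hst : Set.MapsTo mirror s t) :
    DeviationLE volume s (f ∘ mirror) c M := by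
  simpa only [inv_one, abs_one, one_mul] using! h.comp_dilatedReflection one_ne_zero hst

lemma extSpace_comp_mirror (u : ℝ × ℝ → ℝ) :
    extSpace (u ∘ mirror) ∘ mirror = extSpace u := by
  funext p
  have hleft : 1 - p.1 < 0 ↔ 1 < p.1 := sub_neg
  have hright : 1 < 1 - p.1 ↔ p.1 < 0 := by
    constructor <;> intro h <;> linarith
  simp only [extSpace, mirror_apply, Function.comp_apply, hleft, hright]
  split_ifs <;> first | linarith | ring_nf

lemma pCube2_mirror_subset_Ioo_prod_Ioo_iff (hr : 0 < r) {a b c d : ℝ} :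
    pCube2 (mirror z) r ⊆ Set.Ioo a b ×ˢ Set.Ioo c d ↔
      pCube2 z r ⊆ Set.Ioo (1 - b) (1 - a) ×ˢ Set.Ioo c d := by
  simp only [pCube2_subset_Ioo_prod_Ioo_iff hr, mirror_apply]
  constructor <;> rintro ⟨⟨hl, hr⟩, ht⟩ <;> exact ⟨⟨by linarith, by linarith⟩, ht⟩

lemma pCube2_mirror_subset_Omega_iff (hr : 0 < r) {T : ℝ} :
    pCube2 (mirror z) r ⊆ Omega T ↔ pCube2 z r ⊆ Omega T := by
  rw [Omega, pCube2_mirror_subset_Ioo_prod_Ioo_iff hr, sub_self, sub_zero]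

lemma pCube2_mirror_subset_OmegaHat_iff (hr : 0 < r) {T : ℝ} :
    pCube2 (mirror z) r ⊆ OmegaHat T ↔ pCube2 z r ⊆ OmegaHat T := by
  rw [OmegaHat, pCube2_mirror_subset_Ioo_prod_Ioo_iff hr]
  norm_num

lemma mapsTo_mirror_pCube2 (hr : 0 < r) :
    Set.MapsTo mirror (pCube2 z r) (pCube2 (mirror z) r) := fun p hp => by
  simp only [mem_pCube2 hr, mirror_apply, Set.mem_Ioo] at hp ⊢
  exact ⟨⟨by linarith, by linarith⟩, hp.2⟩

end Mirror

section ExtSpace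

variable {T : ℝ} {u : ℝ × ℝ → ℝ} {z : ℝ × ℝ} {r M : ℝ}

lemma ae_le_inter_fst_Iio_union_inter_fst_Ioi (s : Set (ℝ × ℝ)) (a : ℝ) :
    s ≤ᵐ[volume] (s ∩ Prod.fst ⁻¹' Set.Iio a ∪ s ∩ Prod.fst ⁻¹' Set.Ioi a : Set (ℝ × ℝ)) := by
  have hne : ∀ᵐ p : ℝ × ℝ, p.1 ≠ a :=
    Measure.quasiMeasurePreserving_fst.ae (Measure.ae_ne volume a)
  filter_upwards [hne] with p hp hps
  exact hp.lt_or_gt.imp (⟨hps, ·⟩) (⟨hps, ·⟩)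

lemma exists_deviationLE_extSpace_of_zero_mem
    (hu : ∀ z, pCube2 z r ⊆ Omega T → ∃ c, DeviationLE volume (pCube2 z r) u c M)
    (hr : 0 < r) (hr' : r ≤ 1 / 2) (ht : 0 ≤ z.2 - r ^ 2 ∧ z.2 + r ^ 2 ≤ T)
    (h0 : 0 ∈ Set.Ioo (z.1 - r) (z.1 + r)) :
    ∃ c, DeviationLE volume (pCube2 z r) (extSpace u) c (12 * M) := by
  obtain ⟨c, hc⟩ := hu (r, z.2) <|
    (pCube2_subset_Ioo_prod_Ioo_iff hr).2 ⟨⟨by simp, by dsimp; linarith⟩, ht⟩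
  refine ⟨c, (hc.union_of_eqOn_reflectedExtension (e := 0) ?_ ?_ ?_ ?_ ?_ ?_ ?_).mono_set
    (ae_le_inter_fst_Iio_union_inter_fst_Ioi _ 0)⟩
  · exact (measurableSet_pCube2 hr).inter (measurable_fst measurableSet_Iio)
  · exact (measurableSet_pCube2 hr).inter (measurable_fst measurableSet_Ioi)
  all_goals
    rintro p ⟨hp, hp0⟩
    obtain ⟨hpx, hpt⟩ := (mem_pCube2 hr).1 hp
    simp only [Set.mem_preimage, Set.mem_Iio, Set.mem_Ioi, Set.mem_Ioo] at hp0 hpx h0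
  · exact extSpace_of_fst_neg hp0
  · exact extSpace_of_fst_mem_Icc ⟨hp0.le, by linarith⟩
  · exact dilatedReflection_mem_pCube2 hr hp ⟨by linarith, by linarith⟩
  · exact dilatedReflection_mem_pCube2 hr hp ⟨by linarith, by linarith⟩
  · exact (mem_pCube2 hr).2 ⟨⟨by linarith, by linarith⟩, hpt⟩

lemma exists_deviationLE_extSpace_of_fst_add_nonpos
    (hu : ∀ z, pCube2 z r ⊆ Omega T → ∃ c, DeviationLE volume (pCube2 z r) u c M)
    (hr : 0 < r) (hr' : r ≤ 1 / 2) (ht : 0 ≤ z.2 - r ^ 2 ∧ z.2 + r ^ 2 ≤ T)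
    (hl : -1 ≤ z.1 - r) (h0 : z.1 + r ≤ 0) :
    ∃ c, DeviationLE volume (pCube2 z r) (extSpace u) c (11 * M) := by
  obtain ⟨c₁, hc₁⟩ := hu (-z.1, z.2) <|
    (pCube2_subset_Ioo_prod_Ioo_iff hr).2 ⟨⟨by dsimp; linarith, by dsimp; linarith⟩, ht⟩
  -- The halved reflection has width `r`; the cube of radius `r` is placed at its left end.
  obtain ⟨c₂, hc₂⟩ := hu ((r - z.1) / 2, z.2) <|
    (pCube2_subset_Ioo_prod_Ioo_iff hr).2 ⟨⟨by dsimp; linarith, by dsimp; linarith⟩, ht⟩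
  refine ⟨_, (deviationLE_reflectedExtension (e := 0) hc₁ hc₂ ?_ ?_).congr
    (measurableSet_pCube2 hr) ?_⟩
  all_goals
    intro p hp
    obtain ⟨hpl, hpr⟩ := ((mem_pCube2 hr).1 hp).1
  · exact dilatedReflection_mem_pCube2 hr hp ⟨by linarith, by linarith⟩
  · exact dilatedReflection_mem_pCube2 hr hp ⟨by linarith, by linarith⟩
  · exact extSpace_of_fst_neg (hpr.trans_le h0)

lemma exists_deviationLE_extSpace_of_fst_le_half
    (hu : ∀ z, pCube2 z r ⊆ Omega T → ∃ c, DeviationLE volume (pCube2 z r) u c M)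
    (hr : 0 < r) (hr' : r ≤ 1 / 2) (hz : pCube2 z r ⊆ OmegaHat T) (hx : z.1 ≤ 1 / 2) :
    ∃ c, DeviationLE volume (pCube2 z r) (extSpace u) c (12 * M) := by
  obtain ⟨⟨hl, -⟩, ht⟩ := (pCube2_subset_Ioo_prod_Ioo_iff hr).1 hz
  rcases le_or_gt (z.1 + r) 0 with houtside | hright
  · obtain ⟨c, hc⟩ := exists_deviationLE_extSpace_of_fst_add_nonpos hu hr hr' ht hl houtside
    exact ⟨c, hc.mono (by linarith [hc.nonneg])⟩
  rcases lt_or_ge (z.1 - r) 0 with hleft | hinside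
  · exact exists_deviationLE_extSpace_of_zero_mem hu hr hr' ht ⟨hleft, hright⟩
  have hsub : pCube2 z r ⊆ Omega T :=
    (pCube2_subset_Ioo_prod_Ioo_iff hr).2 ⟨⟨hinside, by linarith⟩, ht⟩
  obtain ⟨c, hc⟩ := hu z hsub
  have hext : Set.EqOn (extSpace u) u (pCube2 z r) := fun p hp =>
    extSpace_of_fst_mem_Icc (Set.Ioo_subset_Icc_self (hsub hp).1)
  exact ⟨c, (hc.congr (measurableSet_pCube2 hr) hext).mono (by linarith [hc.nonneg])⟩

lemma exists_deviationLE_extSpace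
    (hu : ∀ z, pCube2 z r ⊆ Omega T → ∃ c, DeviationLE volume (pCube2 z r) u c M)
    (hr : 0 < r) (hr' : r ≤ 1 / 2) (hz : pCube2 z r ⊆ OmegaHat T) :
    ∃ c, DeviationLE volume (pCube2 z r) (extSpace u) c (12 * M) := by
  rcases le_or_gt z.1 (1 / 2) with hx | hx
  · exact exists_deviationLE_extSpace_of_fst_le_half hu hr hr' hz hx
  have hu' (w) (hw : pCube2 w r ⊆ Omega T) :
      ∃ c, DeviationLE volume (pCube2 w r) (u ∘ mirror) c M :=
    (hu (mirror w) ((pCube2_mirror_subset_Omega_iff hr).2 hw)).imp fun _ hc =>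
      hc.comp_mirror (mapsTo_mirror_pCube2 hr)
  obtain ⟨c, hc⟩ := exists_deviationLE_extSpace_of_fst_le_half hu' hr hr'
    ((pCube2_mirror_subset_OmegaHat_iff hr).2 hz) (by rw [mirror_apply]; linarith)
  rw [← extSpace_comp_mirror]
  exact ⟨c, hc.comp_mirror (mapsTo_mirror_pCube2 hr)⟩

end ExtSpace

theorem small_cube_estimate_hat_general {T : ℝ} {u : ℝ × ℝ → ℝ} (hu : IntegrableOn u (Omega T))
    (hb : BddAbove (oscSet2 (Omega T) u)) {z₀ : ℝ × ℝ} {r : ℝ} (hr : 0 < r) (hr' : r ≤ 1 / 2)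
    (hQ : pCube2 z₀ r ⊆ OmegaHat T) :
    (⨅ c : ℝ, ⨍ p in pCube2 z₀ r, |uext T u p - c|) ≤ 12 * pBMO2 (Omega T) u := by
  obtain ⟨c, hc⟩ := exists_deviationLE_extSpace
    (fun z hz => ⟨_, deviationLE_setAverage_pCube2 hu hb hr hz⟩) hr hr' hQ
  have hext : Set.EqOn (uext T u) (extSpace u) (pCube2 z₀ r) := fun p hp =>
    uext_eq_extSpace (Set.Ioo_subset_Icc_self (hQ hp).2)
  refine DeviationLE.iInf_setAverage_le (c := c) ?_ (volume_real_pCube2_pos hr)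
  rw [volume_real_pCube2 hr, mul_left_comm]
  exact hc.congr (measurableSet_pCube2 hr) hext

/-- **Estimates on small parabolic cubes in `Ω̂_T = (-1,2) × (0,T)`** (Lemma 3.4): for every
parabolic cube `Q_r ⊆ Ω̂_T` with `r ≤ r₁ = r₀/2`, `r₀ = min(1/2, √(T/2))`,
`inf_c ⨍_{Q_r} |ũ - c| ≤ C ‖u‖_{BMOₚ(Ω_T)}` with `C` universal. -/
theorem small_cube_estimate_hat : ∃ C : ℝ, 0 < C ∧ ∀ T : ℝ, 0 < T →
    ∀ u : ℝ × ℝ → ℝ, ContinuousOn u (Set.Icc (0 : ℝ) 1 ×ˢ Set.Icc (0 : ℝ) T) →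
      BddAbove (oscSet2 (Omega T) u) →
      ∀ (z₀ : ℝ × ℝ) (r : ℝ), 0 < r → r ≤ min (1 / 2) (Real.sqrt (T / 2)) / 2 →
        pCube2 z₀ r ⊆ OmegaHat T →
        (⨅ c : ℝ, ⨍ p in pCube2 z₀ r, |uext T u p - c|) ≤ C * pBMO2 (Omega T) u := by
  refine ⟨12, by norm_num, fun T _ u hu hb z₀ r hr hr₁ hQ => ?_⟩
  have hint : IntegrableOn u (Omega T) :=
    (hu.integrableOn_compact (isCompact_Icc.prod isCompact_Icc)).mono_set
      (Set.prod_mono Set.Ioo_subset_Icc_self Set.Ioo_subset_Icc_self)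
  have hr₂ : r ≤ 1 / 2 := by linarith [min_le_left (1 / 2) (√(T / 2))]
  exact small_cube_estimate_hat_general hint hb hr hr₂ hQ

end
end
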